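/- arXiv:1502.05594 — 2 statements merged into one kernel-verified Lean document; each statement's English description precedes it below -/
import Mathlib

section
/- Let $\alpha\in(-1,\infty)$, $p\in[1,\infty)$, $a\ge 0$, $r>0$, and let $\nu(dx)=x_1^\alpha\,dx$ on $\mathbb{R}^d_+$. For any $u\in C^\infty_{loc}(\overline{\mathbb{R}^d_+})$, $$\int_{B_r^+(a)}\int_{B_r^+(a)}|u(x)-u(y)|^p\,\nu(dx)\,\nu(dy)\le C\, r^p\,\nu(B_r^+(a))\int_{B_r^+(a)}|Du(x)|^p\,\nu(dx),$$ where $C=C(d,p,\alpha)$ and $B_r^+(a)=((a-r)^+, a+r)\times B'_r(0)$ intersected with $\{x_1>0\}$ in the first coordinate. -/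
open MeasureTheory

/-- The half ball `B_r^+(a) = ((a-r)⁺, a+r) × B'_r(0)` in `ℝ^d = ℝ × ℝ^{d-1}`,
centered at `(a, 0')`, intersected with `{x₁ > 0}`. -/
def halfBallAt (d : ℕ) (a r : ℝ) : Set (ℝ × EuclideanSpace ℝ (Fin (d - 1))) :=
  Set.Ioo (max (a - r) 0) (a + r) ×ˢ Metric.ball (0 : EuclideanSpace ℝ (Fin (d - 1))) r

open scoped ENNReal

/-- Jensen's inequality for the power `p ≥ 1` and a not necessarily normalised measure. -/
lemma lintegral_rpow_le_measure_univ_rpow_mul {X : Type*} [MeasurableSpace X] (μ : Measure X)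
    {p : ℝ} (hp : 1 ≤ p) {f : X → ℝ≥0∞} (hf : AEMeasurable f μ) :
    (∫⁻ x, f x ∂μ) ^ p ≤ μ Set.univ ^ (p - 1) * ∫⁻ x, f x ^ p ∂μ := by
  rcases hp.eq_or_lt with rfl | hp
  · simp
  have hp0 : 0 < p := by linarith
  have hpq := Real.HolderConjugate.conjExponent hp
  have h := ENNReal.lintegral_mul_le_Lp_mul_Lq μ hpq hf (aemeasurable_const (b := (1 : ℝ≥0∞)))
  simp only [Pi.mul_apply, mul_one, ENNReal.one_rpow, lintegral_const, one_mul] at h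
  refine (ENNReal.rpow_le_rpow h hp0.le).trans_eq ?_
  rw [ENNReal.mul_rpow_of_nonneg _ _ hp0.le, ← ENNReal.rpow_mul, ← ENNReal.rpow_mul,
    one_div_mul_cancel hp0.ne', ENNReal.rpow_one, mul_comm]
  congr 2
  rw [Real.conjExponent]
  field_simp

lemma enorm_sub_rpow_le_lintegral_deriv {f : ℝ → ℝ} (hf : ContDiff ℝ 1 f) {p : ℝ} (hp : 1 ≤ p)
    {x y : ℝ} (hxy : x ≤ y) :
    ‖f y - f x‖ₑ ^ p ≤
      ENNReal.ofReal (y - x) ^ (p - 1) * ∫⁻ z in Set.Icc x y, ‖deriv f z‖ₑ ^ p := by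
  refine (ENNReal.rpow_le_rpow
    (enorm_sub_le_lintegral_deriv_of_contDiffOn_Icc hf.contDiffOn hxy) (by linarith)).trans ?_
  refine (lintegral_rpow_le_measure_univ_rpow_mul _ hp
    (hf.continuous_deriv le_rfl).enorm.aemeasurable).trans_eq ?_
  simp

/-- For a measure with density `w` on an interval, a bound on the product of the masses of the two
parts into which a point `z` cuts the interval gives the Poincaré inequality. -/
lemma lintegral_enorm_sub_rpow_le_of_tail_bound {b c : ℝ} {f : ℝ → ℝ} (hf : ContDiff ℝ 1 f)
    {p : ℝ} (hp : 1 ≤ p) {w : ℝ → ℝ≥0∞} (hw : Measurable w) {M : ℝ≥0∞}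
    (hM : ∀ z ∈ Set.Ioo b c,
      ((volume.restrict (Set.Ioo b c)).withDensity w) (Set.Iic z) *
        ((volume.restrict (Set.Ioo b c)).withDensity w) (Set.Ici z) ≤ M * w z) :
    ∫⁻ x, ∫⁻ y, ‖f x - f y‖ₑ ^ p ∂((volume.restrict (Set.Ioo b c)).withDensity w)
        ∂((volume.restrict (Set.Ioo b c)).withDensity w) ≤
      2 * ENNReal.ofReal (c - b) ^ (p - 1) * M *
        ∫⁻ z, ‖deriv f z‖ₑ ^ p ∂((volume.restrict (Set.Ioo b c)).withDensity w) := by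
  set μ := (volume.restrict (Set.Ioo b c)).withDensity w with hμ
  set L := ENNReal.ofReal (c - b) ^ (p - 1)
  set k : ℝ → ℝ≥0∞ := fun z => ‖deriv f z‖ₑ ^ p
  have hkm : Measurable k := by
    have := (hf.continuous_deriv le_rfl).enorm.measurable
    exact this.pow_const p
  have hae : ∀ᵐ x ∂μ, x ∈ Set.Ioo b c :=
    (withDensity_absolutelyContinuous _ _).ae_le (ae_restrict_mem measurableSet_Ioo)
  let T : ℝ → ℝ → ℝ → ℝ≥0∞ := fun x y z =>
    (Set.Iic z).indicator 1 x * (Set.Ici z).indicator 1 y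
  have hTm : Measurable fun q : ℝ × ℝ × ℝ => T q.1 q.2.1 q.2.2 := by
    have h1 : Measurable fun q : ℝ × ℝ × ℝ => (Set.Iic q.2.2).indicator (1 : ℝ → ℝ≥0∞) q.1 := by
      have : MeasurableSet {q : ℝ × ℝ × ℝ | q.1 ≤ q.2.2} :=
        measurableSet_le (by fun_prop) (by fun_prop)
      exact (measurable_one (α := ℝ≥0∞)).indicator this
    have h2 : Measurable fun q : ℝ × ℝ × ℝ => (Set.Ici q.2.2).indicator (1 : ℝ → ℝ≥0∞) q.2.1 := by
      have : MeasurableSet {q : ℝ × ℝ × ℝ | q.2.2 ≤ q.2.1} :=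
        measurableSet_le (by fun_prop) (by fun_prop)
      exact (measurable_one (α := ℝ≥0∞)).indicator this
    exact h1.mul h2
  have hmain : ∀ x ∈ Set.Ioo b c, ∀ y ∈ Set.Ioo b c, x ≤ y →
      ‖f y - f x‖ₑ ^ p ≤ L * ∫⁻ z in Set.Ioo b c, k z * T x y z := by
    intro x hx y hy hxy
    refine (enorm_sub_rpow_le_lintegral_deriv hf hp hxy).trans ?_
    refine mul_le_mul' (ENNReal.rpow_le_rpow (ENNReal.ofReal_le_ofReal
      (by linarith [hx.1, hy.2])) (by linarith)) ?_
    have hsub : Set.Icc x y ⊆ Set.Ioo b c := fun z hz =>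
      ⟨hx.1.trans_le hz.1, hz.2.trans_lt hy.2⟩
    rw [← lintegral_indicator measurableSet_Icc, ← lintegral_indicator measurableSet_Ioo]
    refine lintegral_mono fun z => ?_
    by_cases hz : z ∈ Set.Icc x y
    · rw [Set.indicator_of_mem hz, Set.indicator_of_mem (hsub hz)]
      simp [T, k, hz.1, hz.2]
    · simp [Set.indicator_of_notMem hz]
  have hpt : ∀ x ∈ Set.Ioo b c, ∀ y ∈ Set.Ioo b c,
      ‖f x - f y‖ₑ ^ p ≤ L * ∫⁻ z in Set.Ioo b c, k z * (T x y z + T y x z) := by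
    intro x hx y hy
    rcases le_total x y with h | h
    · rw [← enorm_neg, neg_sub]
      refine (hmain x hx y hy h).trans ?_
      gcongr
      exact le_self_add
    · refine (hmain y hy x hx h).trans ?_
      gcongr
      exact le_add_self
  have hTm' : Measurable fun q : ℝ × ℝ × ℝ => T q.2.1 q.1 q.2.2 :=
    hTm.comp (f := fun q : ℝ × ℝ × ℝ => (q.2.1, q.1, q.2.2)) (by fun_prop)
  have hGm : Measurable fun q : ℝ × ℝ × ℝ =>
      k q.2.2 * (T q.1 q.2.1 q.2.2 + T q.2.1 q.1 q.2.2) :=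
    (hkm.comp (by fun_prop)).mul (hTm.add hTm')
  have hfst : ∀ z, ∫⁻ x, ∫⁻ y, T x y z ∂μ ∂μ = μ (Set.Iic z) * μ (Set.Ici z) := by
    intro z
    simp only [T]
    rw [lintegral_lintegral_mul
      (measurable_one.indicator measurableSet_Iic).aemeasurable
      (measurable_one.indicator measurableSet_Ici).aemeasurable,
      lintegral_indicator_one measurableSet_Iic, lintegral_indicator_one measurableSet_Ici]
  have hswap : ∀ z, ∫⁻ x, ∫⁻ y, T y x z ∂μ ∂μ = μ (Set.Iic z) * μ (Set.Ici z) := by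
    intro z
    rw [← hfst z, lintegral_lintegral_swap]
    exact (hTm.comp (f := fun q : ℝ × ℝ => (q.2, q.1, z)) (by fun_prop)).aemeasurable
  calc
    ∫⁻ x, ∫⁻ y, ‖f x - f y‖ₑ ^ p ∂μ ∂μ
      ≤ ∫⁻ x, ∫⁻ y, L * (∫⁻ z in Set.Ioo b c, k z * (T x y z + T y x z)) ∂μ ∂μ := by
        refine lintegral_mono_ae ?_
        filter_upwards [hae] with x hx
        refine lintegral_mono_ae ?_
        filter_upwards [hae] with y hy
        exact hpt x hx y hy
    _ = L * ∫⁻ x, ∫⁻ y, (∫⁻ z in Set.Ioo b c, k z * (T x y z + T y x z)) ∂μ ∂μ := by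
        have hm2 : Measurable fun q : ℝ × ℝ =>
            ∫⁻ z in Set.Ioo b c, k z * (T q.1 q.2 z + T q.2 q.1 z) :=
          Measurable.lintegral_prod_right'
            (f := fun q : (ℝ × ℝ) × ℝ => k q.2 * (T q.1.1 q.1.2 q.2 + T q.1.2 q.1.1 q.2))
            (hGm.comp (f := fun q : (ℝ × ℝ) × ℝ => (q.1.1, q.1.2, q.2)) (by fun_prop))
        rw [← lintegral_const_mul _ hm2.lintegral_prod_right']
        refine lintegral_congr fun x => ?_
        rw [lintegral_const_mul]
        exact hm2.comp (f := fun y => (x, y)) (by fun_prop)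
    _ = L * ∫⁻ z in Set.Ioo b c, ∫⁻ x, ∫⁻ y, k z * (T x y z + T y x z) ∂μ ∂μ := by
        congr 1
        rw [lintegral_lintegral_swap (μ := volume.restrict (Set.Ioo b c))]
        · refine lintegral_congr fun x => ?_
          rw [lintegral_lintegral_swap]
          exact (hGm.comp (f := fun q : ℝ × ℝ => (x, q.1, q.2)) (by fun_prop)).aemeasurable
        · refine Measurable.aemeasurable ?_
          exact Measurable.lintegral_prod_right'
            (f := fun q : (ℝ × ℝ) × ℝ => k q.1.1 * (T q.1.2 q.2 q.1.1 + T q.2 q.1.2 q.1.1))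
            (hGm.comp (f := fun q : (ℝ × ℝ) × ℝ => (q.1.2, q.2, q.1.1)) (by fun_prop))
    _ = L * ∫⁻ z in Set.Ioo b c, k z * (2 * (μ (Set.Iic z) * μ (Set.Ici z))) := by
        congr 1
        refine lintegral_congr fun z => ?_
        have e1 : ∀ x, ∫⁻ y, k z * (T x y z + T y x z) ∂μ
            = k z * (∫⁻ y, T x y z ∂μ + ∫⁻ y, T y x z ∂μ) := by
          intro x
          have m1 : Measurable fun y => T x y z :=
            hTm.comp (f := fun y => (x, y, z)) (by fun_prop)
          have m2 : Measurable fun y => T y x z :=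
            hTm.comp (f := fun y => (y, x, z)) (by fun_prop)
          rw [lintegral_const_mul _ (by fun_prop), lintegral_add_left m1]
        have m3 : Measurable fun x => ∫⁻ y, T x y z ∂μ :=
          Measurable.lintegral_prod_right' (f := fun q : ℝ × ℝ => T q.1 q.2 z)
            (hTm.comp (f := fun q : ℝ × ℝ => (q.1, q.2, z)) (by fun_prop))
        have m4 : Measurable fun x => ∫⁻ y, T y x z ∂μ :=
          Measurable.lintegral_prod_right' (f := fun q : ℝ × ℝ => T q.2 q.1 z)
            (hTm.comp (f := fun q : ℝ × ℝ => (q.2, q.1, z)) (by fun_prop))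
        simp_rw [e1]
        rw [lintegral_const_mul _ (by fun_prop), lintegral_add_left m3, hfst, hswap, two_mul]
    _ ≤ L * ∫⁻ z in Set.Ioo b c, (2 * M) * (w z * k z) := by
        gcongr 1
        refine setLIntegral_mono (by fun_prop) fun z hz => ?_
        calc k z * (2 * (μ (Set.Iic z) * μ (Set.Ici z))) ≤ k z * (2 * (M * w z)) := by
              gcongr k z * (2 * ?_)
              exact hM z hz
          _ = (2 * M) * (w z * k z) := by ring
    _ = 2 * L * M * ∫⁻ z, k z ∂μ := by
        rw [hμ, lintegral_withDensity_eq_lintegral_mul _ hw hkm,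
          lintegral_const_mul _ (by fun_prop)]
        simp only [Pi.mul_apply]
        ring

/-- The Poincaré inequality on an interval for a power weight. -/
lemma lintegral_enorm_sub_rpow_le_of_rpow_weight {b c : ℝ} (hb : 0 ≤ b) (α : ℝ) {f : ℝ → ℝ}
    (hf : ContDiff ℝ 1 f) {p : ℝ} (hp : 1 ≤ p) {μ : Measure ℝ}
    (hμ : μ = (volume.restrict (Set.Ioo b c)).withDensity fun x => ENNReal.ofReal (x ^ α)) :
    ∫⁻ x, ∫⁻ y, ‖f x - f y‖ₑ ^ p ∂μ ∂μ ≤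
      2 * ENNReal.ofReal (c - b) ^ p * μ Set.univ * ∫⁻ z, ‖deriv f z‖ₑ ^ p ∂μ := by
  have hw : Measurable fun x : ℝ => ENNReal.ofReal (x ^ α) := by fun_prop
  have key := lintegral_enorm_sub_rpow_le_of_tail_bound (b := b) (c := c) hf hp hw
    (M := ENNReal.ofReal (c - b) * μ Set.univ) ?_
  · rw [← hμ] at key
    refine key.trans_eq ?_
    have : ENNReal.ofReal (c - b) ^ p
        = ENNReal.ofReal (c - b) ^ (p - 1) * ENNReal.ofReal (c - b) := by
      conv_rhs => rw [← ENNReal.rpow_one (ENNReal.ofReal (c - b)), ← ENNReal.rpow_mul, one_mul,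
        ← ENNReal.rpow_add_of_nonneg _ _ (by linarith) zero_le_one, sub_add_cancel]
    rw [this]
    ring
  · rw [← hμ]
    intro z hz
    have bound : ∀ s : Set ℝ, MeasurableSet s →
        (∀ x ∈ s ∩ Set.Ioo b c, x ^ α ≤ z ^ α) →
        μ s ≤ ENNReal.ofReal (c - b) * ENNReal.ofReal (z ^ α) := by
      intro s hs hsz
      rw [hμ, withDensity_apply _ hs, Measure.restrict_restrict hs]
      calc ∫⁻ x in s ∩ Set.Ioo b c, ENNReal.ofReal (x ^ α)
          ≤ ∫⁻ _ in s ∩ Set.Ioo b c, ENNReal.ofReal (z ^ α) :=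
            setLIntegral_mono (by fun_prop) fun x hx => ENNReal.ofReal_le_ofReal (hsz x hx)
        _ ≤ ∫⁻ _ in Set.Ioo b c, ENNReal.ofReal (z ^ α) :=
            lintegral_mono_set Set.inter_subset_right
        _ = ENNReal.ofReal (c - b) * ENNReal.ofReal (z ^ α) := by
            simp [mul_comm]
    have hz0 : 0 < z := hb.trans_lt hz.1
    rcases le_total 0 α with h | h
    · calc μ (Set.Iic z) * μ (Set.Ici z)
          ≤ (ENNReal.ofReal (c - b) * ENNReal.ofReal (z ^ α)) * μ Set.univ :=
            mul_le_mul' (bound _ measurableSet_Iic fun x hx =>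
              Real.rpow_le_rpow (hb.trans hx.2.1.le) hx.1 h) (measure_mono (Set.subset_univ _))
        _ = _ := by ring
    · calc μ (Set.Iic z) * μ (Set.Ici z)
          ≤ μ Set.univ * (ENNReal.ofReal (c - b) * ENNReal.ofReal (z ^ α)) :=
            mul_le_mul' (measure_mono (Set.subset_univ _)) (bound _ measurableSet_Ici fun x hx =>
              Real.rpow_le_rpow_of_nonpos hz0 hx.1 h)
        _ = _ := by ring

section Convex

variable {E : Type*} [NormedAddCommGroup E] [NormedSpace ℝ E] [FiniteDimensional ℝ E]
  [MeasurableSpace E] [BorelSpace E]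

lemma lintegral_comp_add_smul_le (μ : Measure E) [μ.IsAddHaarMeasure] {F : E → ℝ≥0∞}
    (hF : Measurable F) (c : E) {t : ℝ} (ht : 1 / 2 ≤ t) :
    ∫⁻ x, F (c + t • x) ∂μ ≤ 2 ^ Module.finrank ℝ E * ∫⁻ x, F x ∂μ := by
  have ht0 : 0 < t := by linarith
  calc ∫⁻ x, F (c + t • x) ∂μ = ∫⁻ x, F (c + x) ∂(μ.map (t • ·)) := by
        rw [lintegral_map (by fun_prop) (by fun_prop)]
    _ = ENNReal.ofReal (|(t ^ Module.finrank ℝ E)⁻¹|) * ∫⁻ x, F x ∂μ := by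
        rw [Measure.map_addHaar_smul _ ht0.ne', lintegral_smul_measure,
          lintegral_add_left_eq_self]
        rfl
    _ ≤ _ := by
        gcongr
        rw [abs_of_pos (by positivity), ← inv_pow,
          ENNReal.ofReal_pow (by positivity)]
        gcongr
        rw [← ENNReal.ofReal_ofNat]
        apply ENNReal.ofReal_le_ofReal
        rw [inv_le_comm₀ ht0 two_pos]
        linarith

lemma lintegral_lintegral_comp_segment_le (μ : Measure E) [μ.IsAddHaarMeasure] {s : Set E}
    (hs : Convex ℝ s) (hsm : MeasurableSet s) {F : E → ℝ≥0∞} (hF : Measurable F)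
    {t : ℝ} (ht : t ∈ Set.Icc (0 : ℝ) 1) :
    ∫⁻ x in s, ∫⁻ y in s, F (x + t • (y - x)) ∂μ ∂μ ≤
      2 ^ Module.finrank ℝ E * μ s * ∫⁻ x in s, F x ∂μ := by
  have key : ∀ τ : ℝ, 1 / 2 ≤ τ → τ ≤ 1 → ∀ x ∈ s,
      ∫⁻ y in s, F (x + τ • (y - x)) ∂μ ≤
        2 ^ Module.finrank ℝ E * ∫⁻ x in s, F x ∂μ := by
    intro τ h1 h2 x hx
    have h0 : 0 ≤ τ := by linarith
    rw [← lintegral_indicator hsm, ← lintegral_indicator hsm]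
    refine le_trans (lintegral_mono fun y => ?_)
      (lintegral_comp_add_smul_le μ (hF.indicator hsm) ((1 - τ) • x) h1)
    by_cases hy : y ∈ s
    · have hmem : (1 - τ) • x + τ • y ∈ s := hs hx hy (by linarith) h0 (by ring)
      rw [Set.indicator_of_mem hy, Set.indicator_of_mem hmem]
      refine le_of_eq (congrArg F ?_)
      module
    · simp [Set.indicator_of_notMem hy]
  have outer : ∀ {G : E → ℝ≥0∞} {K : ℝ≥0∞}, (∀ x ∈ s, G x ≤ K) →
      ∫⁻ x in s, G x ∂μ ≤ K * μ s := by
    intro G K h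
    calc ∫⁻ x in s, G x ∂μ ≤ ∫⁻ _ in s, K ∂μ := setLIntegral_mono measurable_const h
      _ = K * μ s := by simp
  rcases le_total (1 / 2) t with h | h
  · refine (outer (key t h ht.2)).trans_eq (by ring)
  · rw [lintegral_lintegral_swap (Measurable.aemeasurable (by fun_prop))]
    refine (outer (K := 2 ^ Module.finrank ℝ E * ∫⁻ x in s, F x ∂μ) fun x hx => ?_).trans_eq
      (by ring)
    refine le_trans (le_of_eq (lintegral_congr fun y => congrArg F ?_))
      (key (1 - t) (by linarith) (by linarith [ht.1]) x hx)
    module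

/-- The Poincaré inequality on a ball. -/
lemma lintegral_enorm_sub_rpow_le_of_ball (μ : Measure E) [μ.IsAddHaarMeasure]
    (c : E) (r : ℝ) {v : E → ℝ} (hv : ContDiff ℝ 1 v) {p : ℝ} (hp : 1 ≤ p) :
    ∫⁻ x in Metric.ball c r, ∫⁻ y in Metric.ball c r, ‖v x - v y‖ₑ ^ p ∂μ ∂μ ≤
      2 ^ Module.finrank ℝ E * ENNReal.ofReal (2 * r) ^ p * μ (Metric.ball c r) *
        ∫⁻ x in Metric.ball c r, ‖fderiv ℝ v x‖ₑ ^ p ∂μ := by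
  have hp0 : 0 ≤ p := by linarith
  set B := Metric.ball c r
  set F : E → ℝ≥0∞ := fun z => ‖fderiv ℝ v z‖ₑ ^ p
  have hF : Measurable F := (hv.continuous_fderiv one_ne_zero).enorm.measurable.pow_const p
  set D := ENNReal.ofReal (2 * r) ^ p
  have hpt : ∀ x ∈ B, ∀ y ∈ B,
      ‖v x - v y‖ₑ ^ p ≤ D * ∫⁻ t in Set.Icc (0 : ℝ) 1, F (x + t • (y - x)) := by
    intro x hx y hy
    have hg : ContDiff ℝ 1 fun t : ℝ => v (x + t • (y - x)) := by fun_prop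
    have h := enorm_sub_rpow_le_lintegral_deriv hg hp zero_le_one
    simp only [one_smul, add_sub_cancel, zero_smul, add_zero, sub_zero, ENNReal.ofReal_one,
      ENNReal.one_rpow, one_mul] at h
    rw [← enorm_neg, neg_sub]
    refine h.trans ?_
    rw [← lintegral_const_mul _ (by fun_prop)]
    refine lintegral_mono fun t => ?_
    have hd : HasDerivAt (fun t : ℝ => v (x + t • (y - x)))
        (fderiv ℝ v (x + t • (y - x)) (y - x)) t := by
      have h1 : HasDerivAt (fun t : ℝ => x + t • (y - x)) (y - x) t := by
        simpa using ((hasDerivAt_id t).smul_const (y - x)).const_add x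
      exact ((hv.differentiable one_ne_zero _).hasFDerivAt).comp_hasDerivAt t h1
    simp only [hd.deriv, F, D]
    rw [← ENNReal.mul_rpow_of_nonneg _ _ hp0]
    refine ENNReal.rpow_le_rpow ?_ hp0
    refine (ContinuousLinearMap.le_opENorm _ _).trans ?_
    rw [mul_comm]
    gcongr
    rw [← ofReal_norm]
    refine ENNReal.ofReal_le_ofReal ?_
    rw [← dist_eq_norm]
    have := dist_triangle_right y x c
    have h1 := Metric.mem_ball.1 hx
    have h2 := Metric.mem_ball.1 hy
    linarith
  have hGm : Measurable fun q : E × E × ℝ => F (q.1 + q.2.2 • (q.2.1 - q.1)) := by fun_prop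
  calc ∫⁻ x in B, ∫⁻ y in B, ‖v x - v y‖ₑ ^ p ∂μ ∂μ
      ≤ ∫⁻ x in B, ∫⁻ y in B, D * (∫⁻ t in Set.Icc (0 : ℝ) 1, F (x + t • (y - x))) ∂μ ∂μ := by
        refine setLIntegral_mono' measurableSet_ball fun x hx => ?_
        exact setLIntegral_mono' measurableSet_ball fun y hy => hpt x hx y hy
    _ = D * ∫⁻ x in B, ∫⁻ y in B, (∫⁻ t in Set.Icc (0 : ℝ) 1, F (x + t • (y - x))) ∂μ ∂μ := by
        have hm2 : Measurable fun q : E × E =>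
            ∫⁻ t in Set.Icc (0 : ℝ) 1, F (q.1 + t • (q.2 - q.1)) :=
          Measurable.lintegral_prod_right'
            (f := fun q : (E × E) × ℝ => F (q.1.1 + q.2 • (q.1.2 - q.1.1))) (by fun_prop)
        rw [← lintegral_const_mul _ hm2.lintegral_prod_right']
        refine lintegral_congr fun x => ?_
        rw [lintegral_const_mul]
        exact hm2.comp (f := fun y => (x, y)) (by fun_prop)
    _ = D * ∫⁻ t in Set.Icc (0 : ℝ) 1, ∫⁻ x in B, ∫⁻ y in B, F (x + t • (y - x)) ∂μ ∂μ := by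
        congr 1
        rw [lintegral_lintegral_swap (μ := volume.restrict (Set.Icc (0 : ℝ) 1))]
        · refine lintegral_congr fun x => ?_
          rw [lintegral_lintegral_swap]
          exact (hGm.comp (f := fun q : E × ℝ => (x, q.1, q.2)) (by fun_prop)).aemeasurable
        · refine Measurable.aemeasurable ?_
          exact Measurable.lintegral_prod_right'
            (f := fun q : (ℝ × E) × E => F (q.1.2 + q.1.1 • (q.2 - q.1.2))) (by fun_prop)
    _ ≤ D * ∫⁻ t in Set.Icc (0 : ℝ) 1, (2 ^ Module.finrank ℝ E * μ B * ∫⁻ x in B, F x ∂μ) := by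
        gcongr 1
        exact setLIntegral_mono' measurableSet_Icc fun t ht =>
          lintegral_lintegral_comp_segment_le μ (convex_ball c r) measurableSet_ball hF ht
    _ = _ := by
        simp
        ring

end Convex

/-- Poincaré inequalities on the slices of a product combine to one on the product. -/
lemma lintegral_prod_enorm_sub_rpow_le {X Y : Type*} [MeasurableSpace X] [MeasurableSpace Y]
    (μ : Measure X) (ν : Measure Y) [SFinite μ] [SFinite ν] {p : ℝ} (hp : 1 ≤ p)
    {u : X × Y → ℝ} (hu : Measurable u) {K : X × Y → ℝ≥0∞} (hK : Measurable K) {A B : ℝ≥0∞}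
    (hX : ∀ y, ∫⁻ x, ∫⁻ x', ‖u (x, y) - u (x', y)‖ₑ ^ p ∂μ ∂μ ≤
      A * μ Set.univ * ∫⁻ x, K (x, y) ∂μ)
    (hY : ∀ x, ∫⁻ y, ∫⁻ y', ‖u (x, y) - u (x, y')‖ₑ ^ p ∂ν ∂ν ≤
      B * ν Set.univ * ∫⁻ y, K (x, y) ∂ν) :
    ∫⁻ z, ∫⁻ z', ‖u z - u z'‖ₑ ^ p ∂(μ.prod ν) ∂(μ.prod ν) ≤
      2 ^ (p - 1) * (A + B) * (μ.prod ν) Set.univ * ∫⁻ z, K z ∂(μ.prod ν) := by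
  have hp0 : 0 ≤ p := by linarith
  have m1 : Measurable fun q : (X × Y) × (X × Y) => ‖u q.1 - u (q.2.1, q.1.2)‖ₑ ^ p :=
    Measurable.pow_const (by fun_prop) p
  have m2 : Measurable fun q : (X × Y) × (X × Y) => ‖u (q.2.1, q.1.2) - u q.2‖ₑ ^ p :=
    Measurable.pow_const (by fun_prop) p
  have huniv : (μ.prod ν) Set.univ = μ Set.univ * ν Set.univ := by
    rw [← Set.univ_prod_univ, Measure.prod_prod]
  have first : ∫⁻ z, ∫⁻ z', ‖u z - u (z'.1, z.2)‖ₑ ^ p ∂(μ.prod ν) ∂(μ.prod ν) ≤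
      A * (μ.prod ν) Set.univ * ∫⁻ z, K z ∂(μ.prod ν) := by
    have e : ∀ z : X × Y, ∫⁻ z', ‖u z - u (z'.1, z.2)‖ₑ ^ p ∂(μ.prod ν)
        = ν Set.univ * ∫⁻ x', ‖u z - u (x', z.2)‖ₑ ^ p ∂μ := by
      intro z
      have m : Measurable fun x' => ‖u z - u (x', z.2)‖ₑ ^ p :=
        Measurable.pow_const (by fun_prop) p
      rw [lintegral_prod _ (Measurable.aemeasurable (by fun_prop))]
      simp only [lintegral_const]
      rw [lintegral_mul_const _ m, mul_comm]
    have m3 : Measurable fun z : X × Y => ∫⁻ x', ‖u z - u (x', z.2)‖ₑ ^ p ∂μ :=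
      Measurable.lintegral_prod_right'
        (f := fun q : (X × Y) × X => ‖u q.1 - u (q.2, q.1.2)‖ₑ ^ p)
        (Measurable.pow_const (by fun_prop) p)
    simp_rw [e]
    rw [lintegral_const_mul _ m3, lintegral_prod_symm' _ m3, lintegral_prod_symm' _ hK, huniv]
    calc ν Set.univ * ∫⁻ y, ∫⁻ x, ∫⁻ x', ‖u (x, y) - u (x', y)‖ₑ ^ p ∂μ ∂μ ∂ν
        ≤ ν Set.univ * ∫⁻ y, A * μ Set.univ * ∫⁻ x, K (x, y) ∂μ ∂ν := by
          gcongr with y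
          exact hX y
      _ = _ := by
          rw [lintegral_const_mul _ hK.lintegral_prod_left']
          ring
  have second : ∫⁻ z, ∫⁻ z', ‖u (z'.1, z.2) - u z'‖ₑ ^ p ∂(μ.prod ν) ∂(μ.prod ν) ≤
      B * (μ.prod ν) Set.univ * ∫⁻ z, K z ∂(μ.prod ν) := by
    have m3 : Measurable fun q : Y × X => ∫⁻ y', ‖u (q.2, q.1) - u (q.2, y')‖ₑ ^ p ∂ν :=
      Measurable.lintegral_prod_right'
        (f := fun q : (Y × X) × Y => ‖u (q.1.2, q.1.1) - u (q.1.2, q.2)‖ₑ ^ p)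
        (Measurable.pow_const (by fun_prop) p)
    have e : ∀ z : X × Y, ∫⁻ z', ‖u (z'.1, z.2) - u z'‖ₑ ^ p ∂(μ.prod ν)
        = ∫⁻ x', ∫⁻ y', ‖u (x', z.2) - u (x', y')‖ₑ ^ p ∂ν ∂μ := by
      intro z
      rw [lintegral_prod _ (Measurable.aemeasurable (Measurable.pow_const (by fun_prop) p))]
    have m4 : Measurable fun y => ∫⁻ x', ∫⁻ y', ‖u (x', y) - u (x', y')‖ₑ ^ p ∂ν ∂μ :=
      m3.lintegral_prod_right'
    simp_rw [e]
    rw [lintegral_prod (fun z : X × Y => ∫⁻ x', ∫⁻ y', ‖u (x', z.2) - u (x', y')‖ₑ ^ p ∂ν ∂μ)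
        (m4.comp measurable_snd).aemeasurable,
      lintegral_prod _ hK.aemeasurable, huniv]
    simp only [lintegral_const]
    rw [lintegral_lintegral_swap m3.aemeasurable]
    calc (∫⁻ x, ∫⁻ y, ∫⁻ y', ‖u (x, y) - u (x, y')‖ₑ ^ p ∂ν ∂ν ∂μ) * μ Set.univ
        ≤ (∫⁻ x, B * ν Set.univ * ∫⁻ y, K (x, y) ∂ν ∂μ) * μ Set.univ := by
          gcongr with x
          exact hY x
      _ = _ := by
          rw [lintegral_const_mul _ hK.lintegral_prod_right']
          ring
  calc ∫⁻ z, ∫⁻ z', ‖u z - u z'‖ₑ ^ p ∂(μ.prod ν) ∂(μ.prod ν)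
      ≤ ∫⁻ z, ∫⁻ z', 2 ^ (p - 1) * (‖u z - u (z'.1, z.2)‖ₑ ^ p + ‖u (z'.1, z.2) - u z'‖ₑ ^ p)
          ∂(μ.prod ν) ∂(μ.prod ν) := by
        gcongr with z z'
        refine (ENNReal.rpow_le_rpow ?_ hp0).trans (ENNReal.rpow_add_le_mul_rpow_add_rpow _ _ hp)
        rw [← sub_add_sub_cancel (u z) (u (z'.1, z.2)) (u z')]
        exact enorm_add_le _ _
    _ = 2 ^ (p - 1) *
          (∫⁻ z, ∫⁻ z', ‖u z - u (z'.1, z.2)‖ₑ ^ p ∂(μ.prod ν) ∂(μ.prod ν) +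
            ∫⁻ z, ∫⁻ z', ‖u (z'.1, z.2) - u z'‖ₑ ^ p ∂(μ.prod ν) ∂(μ.prod ν)) := by
        have n1 : Measurable fun z => ∫⁻ z', ‖u z - u (z'.1, z.2)‖ₑ ^ p ∂(μ.prod ν) :=
          m1.lintegral_prod_right'
        have n2 : Measurable fun z : X × Y =>
            ∫⁻ z', ‖u (z'.1, z.2) - u z'‖ₑ ^ p ∂(μ.prod ν) :=
          m2.lintegral_prod_right'
        rw [← lintegral_add_left n1, ← lintegral_const_mul _ (by fun_prop)]
        refine lintegral_congr fun z => ?_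
        have m1' : Measurable fun z' : X × Y => ‖u z - u (z'.1, z.2)‖ₑ ^ p :=
          m1.comp measurable_prodMk_left
        have m2' : Measurable fun z' : X × Y => ‖u (z'.1, z.2) - u z'‖ₑ ^ p :=
          m2.comp measurable_prodMk_left
        rw [lintegral_const_mul _ (by fun_prop), lintegral_add_left m1']
    _ ≤ 2 ^ (p - 1) * (A * (μ.prod ν) Set.univ * ∫⁻ z, K z ∂(μ.prod ν) +
          B * (μ.prod ν) Set.univ * ∫⁻ z, K z ∂(μ.prod ν)) := by
        gcongr
    _ = _ := by ring

/-- Weighted Poincaré inequality on half balls: for `α ∈ (-1,∞)`, `p ∈ [1,∞)`,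
`ν(dx) = x₁^α dx`, and any smooth `u`,
`∫∫_{B_r^+(a)²} |u(x)-u(y)|^p ν(dx)ν(dy) ≤ C r^p ν(B_r^+(a)) ∫_{B_r^+(a)} |Du|^p ν(dx)`,
with `C = C(d,p,α)`. -/
theorem stmt_1 (d : ℕ) (hd : 1 ≤ d) (α p : ℝ) (hα : -1 < α) (hp : 1 ≤ p) :
    ∃ C : ℝ, 0 < C ∧ ∀ (a r : ℝ), 0 ≤ a → 0 < r →
      ∀ (u : ℝ × EuclideanSpace ℝ (Fin (d - 1)) → ℝ), ContDiff ℝ (⊤ : ℕ∞) u →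
        (∫⁻ x in halfBallAt d a r, ∫⁻ y in halfBallAt d a r,
            ENNReal.ofReal (|u x - u y| ^ p * x.1 ^ α * y.1 ^ α)) ≤
          ENNReal.ofReal (C * r ^ p) *
            (∫⁻ x in halfBallAt d a r, ENNReal.ofReal (x.1 ^ α)) *
            ∫⁻ x in halfBallAt d a r, ENNReal.ofReal (‖fderiv ℝ u x‖ ^ p * x.1 ^ α) := by
  have hp0 : 0 ≤ p := by linarith
  refine ⟨2 ^ (p - 1) * (2 + 2 ^ (d - 1)) * 2 ^ p, by positivity, ?_⟩
  intro a r ha hr u hu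
  set H := halfBallAt d a r
  set b := max (a - r) 0
  have hHm : MeasurableSet H := measurableSet_Ioo.prod measurableSet_ball
  have hpos : ∀ x ∈ H, 0 ≤ x.1 ^ α := fun x hx =>
    Real.rpow_nonneg ((le_max_right _ _).trans hx.1.1.le) _
  set w : ℝ → ℝ≥0∞ := fun x => ENNReal.ofReal (x ^ α) with hw
  have hwm : Measurable w := by fun_prop
  set μ := (volume.restrict (Set.Ioo b (a + r))).withDensity w with hμ
  set ν := volume.restrict (Metric.ball (0 : EuclideanSpace ℝ (Fin (d - 1))) r) with hν
  have hprod : μ.prod ν = (volume.restrict H).withDensity fun x => w x.1 := by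
    rw [hμ, hν, prod_withDensity_left hwm, Measure.prod_restrict, ← Measure.volume_eq_prod]
    rfl
  have hconv : ∀ g : ℝ × EuclideanSpace ℝ (Fin (d - 1)) → ℝ≥0∞, Measurable g →
      ∫⁻ x, g x ∂(μ.prod ν) = ∫⁻ x in H, w x.1 * g x := by
    intro g hg
    rw [hprod, lintegral_withDensity_eq_lintegral_mul _ (by fun_prop) hg]
    rfl
  have hu1 : ContDiff ℝ 1 u := hu.of_le (by exact_mod_cast le_top)
  have hum : Measurable u := hu1.continuous.measurable
  have hud : Differentiable ℝ u := hu1.differentiable one_ne_zero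
  set K : ℝ × EuclideanSpace ℝ (Fin (d - 1)) → ℝ≥0∞ := fun x => ‖fderiv ℝ u x‖ₑ ^ p with hK
  have hKm : Measurable K := (hu1.continuous_fderiv one_ne_zero).enorm.measurable.pow_const p
  have hlen : ENNReal.ofReal (a + r - b) ≤ ENNReal.ofReal (2 * r) :=
    ENNReal.ofReal_le_ofReal (by linarith [le_max_left (a - r) 0])
  have key := lintegral_prod_enorm_sub_rpow_le μ ν hp hum hKm
    (A := 2 * ENNReal.ofReal (2 * r) ^ p) (B := 2 ^ (d - 1) * ENNReal.ofReal (2 * r) ^ p)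
    (by
      intro y
      have hf : ContDiff ℝ 1 fun x => u (x, y) := by fun_prop
      refine (lintegral_enorm_sub_rpow_le_of_rpow_weight (le_max_right _ _) α hf hp hμ).trans ?_
      gcongr with x
      have hd : HasDerivAt (fun x => u (x, y)) (fderiv ℝ u (x, y) (1, 0)) x :=
        (hud (x, y)).hasFDerivAt.comp_hasDerivAt x
          ((hasDerivAt_id x).prodMk (hasDerivAt_const x y))
      rw [hd.deriv]
      refine ENNReal.rpow_le_rpow ((ContinuousLinearMap.le_opENorm _ _).trans ?_) hp0
      refine mul_le_of_le_one_right' ?_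
      rw [← ofReal_norm, Prod.norm_mk]
      simp)
    (by
      intro x
      have hf : ContDiff ℝ 1 fun y => u (x, y) := by fun_prop
      have h := lintegral_enorm_sub_rpow_le_of_ball volume
        (0 : EuclideanSpace ℝ (Fin (d - 1))) r hf hp
      rw [finrank_euclideanSpace_fin] at h
      refine h.trans ?_
      rw [hν, Measure.restrict_apply_univ]
      gcongr with y
      have hd : HasFDerivAt (fun y => u (x, y))
          ((fderiv ℝ u (x, y)).comp (ContinuousLinearMap.inr ℝ ℝ _)) y :=
        (hud (x, y)).hasFDerivAt.comp y (hasFDerivAt_prodMk_right x y)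
      rw [hd.fderiv]
      refine ENNReal.rpow_le_rpow ((ContinuousLinearMap.opENorm_comp_le _ _).trans ?_) hp0
      refine mul_le_of_le_one_right' ?_
      rw [← ofReal_norm, ← ENNReal.ofReal_one]
      exact ENNReal.ofReal_le_ofReal (ContinuousLinearMap.norm_inr_le_one ℝ ℝ _))
  have hleft : ∫⁻ x in H, ∫⁻ y in H, ENNReal.ofReal (|u x - u y| ^ p * x.1 ^ α * y.1 ^ α)
      = ∫⁻ x, ∫⁻ y, ‖u x - u y‖ₑ ^ p ∂(μ.prod ν) ∂(μ.prod ν) := by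
    rw [hconv _ (Measurable.lintegral_prod_right'
      (f := fun q : (ℝ × EuclideanSpace ℝ (Fin (d - 1))) ×
        (ℝ × EuclideanSpace ℝ (Fin (d - 1))) => ‖u q.1 - u q.2‖ₑ ^ p)
      (Measurable.pow_const (by fun_prop) p))]
    refine setLIntegral_congr_fun hHm fun x hx => ?_
    have hm : Measurable fun y => ‖u x - u y‖ₑ ^ p := Measurable.pow_const (by fun_prop) p
    simp only
    rw [hconv _ hm, ← lintegral_const_mul _ (by fun_prop)]
    refine setLIntegral_congr_fun hHm fun y hy => ?_
    have hx0 := hpos x hx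
    simp only [hw]
    rw [ENNReal.ofReal_mul (by positivity), ENNReal.ofReal_mul (by positivity),
      ← ENNReal.ofReal_rpow_of_nonneg (abs_nonneg _) hp0, ← Real.norm_eq_abs, ofReal_norm]
    ring
  have huniv : (μ.prod ν) Set.univ = ∫⁻ x in H, ENNReal.ofReal (x.1 ^ α) := by
    rw [hprod, withDensity_apply _ MeasurableSet.univ, Measure.restrict_univ]
  have hright : ∫⁻ x, K x ∂(μ.prod ν)
      = ∫⁻ x in H, ENNReal.ofReal (‖fderiv ℝ u x‖ ^ p * x.1 ^ α) := by
    rw [hconv _ hKm]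
    refine setLIntegral_congr_fun hHm fun x hx => ?_
    simp only [hK, hw]
    rw [ENNReal.ofReal_mul (by positivity),
      ← ENNReal.ofReal_rpow_of_nonneg (norm_nonneg _) hp0, ofReal_norm, mul_comm]
  have hconst : ENNReal.ofReal (2 ^ (p - 1) * (2 + 2 ^ (d - 1)) * 2 ^ p * r ^ p) =
      2 ^ (p - 1) * (2 * ENNReal.ofReal (2 * r) ^ p +
        2 ^ (d - 1) * ENNReal.ofReal (2 * r) ^ p) := by
    rw [mul_assoc _ ((2 : ℝ) ^ p), ← Real.mul_rpow two_pos.le hr.le,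
      ENNReal.ofReal_mul (by positivity), ENNReal.ofReal_mul (by positivity),
      ENNReal.ofReal_add two_pos.le (by positivity), ENNReal.ofReal_pow two_pos.le,
      ← ENNReal.ofReal_rpow_of_pos two_pos, ENNReal.ofReal_ofNat,
      ← ENNReal.ofReal_rpow_of_nonneg (by positivity) hp0]
    ring
  rw [hleft, hconst, ← huniv, ← hright]
  exact key
end

section
/- Let $p\in(1,\infty)$, $\theta\in\mathbb{R}$, $\lambda>0$, and let $\|\cdot\|_{p,\theta}$ denote the norm of $L_p$ on $\mathbb{R}^{d+1}_+$ with measure $\mu(dx\,dt)=x_1^{\theta-d}\,dx\,dt$. Then for any $u$ with $u, Du, D^2u$ in this weighted $L_p$ space, $$\sqrt{\lambda}\,\|Du\|_{p,\theta}\le C\,\|D^2u\|_{p,\theta}+C\,\lambda\,\|u\|_{p,\theta},$$ where $C=C(d,p,\theta)$. -/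
open MeasureTheory

noncomputable section

variable (d : ℕ)

/-- The half space `{(t,x) : x₁ > 0}` in `ℝ^{d+1} = ℝ × ℝ × ℝ^{d-1}`. -/
def hSp : Set (ℝ × ℝ × EuclideanSpace ℝ (Fin (d - 1))) := {z | 0 < z.2.1}

/-- The weighted `L_p` "norm" `(∫ g^p x₁^{θ-d} dx dt)^{1/p}` on `ℝ^{d+1}_+`
of a nonnegative quantity `g`. -/
def wNorm (p θ : ℝ) (g : ℝ × ℝ × EuclideanSpace ℝ (Fin (d - 1)) → ℝ) : ENNReal :=
  (∫⁻ z in hSp d, ENNReal.ofReal (g z ^ p * z.2.1 ^ (θ - (d : ℝ)))) ^ (1 / p)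

/-- Spatial gradient of `u(t,·)`. -/
def sGrad (u : ℝ × ℝ × EuclideanSpace ℝ (Fin (d - 1)) → ℝ)
    (z : ℝ × ℝ × EuclideanSpace ℝ (Fin (d - 1))) :=
  fderiv ℝ (fun x : ℝ × EuclideanSpace ℝ (Fin (d - 1)) => u (z.1, x)) z.2

/-- Spatial Hessian of `u(t,·)`. -/
def sHess (u : ℝ × ℝ × EuclideanSpace ℝ (Fin (d - 1)) → ℝ)
    (z : ℝ × ℝ × EuclideanSpace ℝ (Fin (d - 1))) :=
  fderiv ℝ (fun x : ℝ × EuclideanSpace ℝ (Fin (d - 1)) =>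
    fderiv ℝ (fun y : ℝ × EuclideanSpace ℝ (Fin (d - 1)) => u (z.1, y)) x) z.2

open Set

/-- Jensen's inequality for powers of a lower Lebesgue integral. -/
theorem lintegral_rpow_le_measure_rpow_mul {α : Type*} [MeasurableSpace α] (μ : Measure α)
    {p : ℝ} (hp : 1 < p) {f : α → ENNReal} (hf : Measurable f) :
    (∫⁻ x, f x ∂μ) ^ p ≤ μ univ ^ (p - 1) * ∫⁻ x, f x ^ p ∂μ := by
  have hpq := Real.HolderConjugate.conjExponent hp
  have h0 : 0 < p := by linarith
  have h := ENNReal.lintegral_mul_le_Lp_mul_Lq μ hpq hf.aemeasurable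
    (g := fun _ => 1) aemeasurable_const
  simp only [Pi.mul_apply, mul_one, ENNReal.one_rpow, lintegral_const, one_mul] at h
  have h' := ENNReal.rpow_le_rpow h h0.le
  rw [ENNReal.mul_rpow_of_nonneg _ _ h0.le, ← ENNReal.rpow_mul, ← ENNReal.rpow_mul,
    one_div_mul_cancel h0.ne', ENNReal.rpow_one, mul_comm] at h'
  convert h' using 3
  rw [Real.conjExponent]
  field_simp

/-- Schur-type bound for averages over the sets `A x` with respect to a weight `w`. -/
theorem lintegral_rpow_setLIntegral_mul_le {p : ℝ} (hp : 1 < p) {A : ℝ → Set ℝ}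
    (hA : MeasurableSet {q : ℝ × ℝ | q.2 ∈ A q.1}) {ℓ C : ENNReal} (hC : C ≠ ⊤)
    (hpos : ∀ x, 0 < x → A x ⊆ Ioi 0) (hvol : ∀ x, volume (A x) ≤ ℓ)
    {w : ℝ → ENNReal} (hw : Measurable w)
    (hweight : ∀ y, 0 < y → ∫⁻ x in Ioi 0, {x | y ∈ A x}.indicator w x ≤ C * w y)
    {f : ℝ → ENNReal} (hf : Measurable f) :
    ∫⁻ x in Ioi 0, (∫⁻ y in A x, f y) ^ p * w x ≤
      ℓ ^ (p - 1) * C * ∫⁻ y in Ioi 0, f y ^ p * w y := by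
  have hAx : ∀ x, MeasurableSet (A x) := fun x => measurable_prodMk_left hA
  have hfp : Measurable fun y => f y ^ p := hf.pow_const p
  let F : ℝ → ℝ → ENNReal := fun x y => f y ^ p * {x | y ∈ A x}.indicator w x
  have hF : Measurable (Function.uncurry F) := by
    have : Function.uncurry F =
        fun q => f q.2 ^ p * {q : ℝ × ℝ | q.2 ∈ A q.1}.indicator (fun q => w q.1) q := rfl
    rw [this]
    exact (hfp.comp measurable_snd).mul ((hw.comp measurable_fst).indicator hA)
  calc ∫⁻ x in Ioi 0, (∫⁻ y in A x, f y) ^ p * w x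
      ≤ ∫⁻ x in Ioi 0, ℓ ^ (p - 1) * ∫⁻ y in Ioi 0, F x y := by
        refine setLIntegral_mono_ae' measurableSet_Ioi (.of_forall fun x hx => ?_)
        have h1 : ∫⁻ y in Ioi 0, F x y = (∫⁻ y in A x, f y ^ p) * w x := by
          have : ∀ y, F x y = (A x).indicator (fun y => f y ^ p * w x) y := fun y => by
            by_cases hy : y ∈ A x <;> simp [F, hy]
          simp_rw [this]
          rw [setLIntegral_indicator (hAx x), inter_eq_left.2 (hpos x hx),
            lintegral_mul_const _ hfp]
        rw [h1, ← mul_assoc]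
        gcongr
        refine (lintegral_rpow_le_measure_rpow_mul _ hp hf).trans ?_
        rw [Measure.restrict_apply_univ]
        gcongr
        exact hvol x
    _ = ℓ ^ (p - 1) * ∫⁻ x in Ioi 0, ∫⁻ y in Ioi 0, F x y :=
        lintegral_const_mul _ hF.lintegral_prod_right
    _ = ℓ ^ (p - 1) * ∫⁻ y in Ioi 0, f y ^ p * ∫⁻ x in Ioi 0, {x | y ∈ A x}.indicator w x := by
        rw [lintegral_lintegral_swap hF.aemeasurable]
        congr 1
        refine lintegral_congr fun y => ?_
        exact lintegral_const_mul _ (hw.indicator (measurable_prodMk_right hA))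
    _ ≤ ℓ ^ (p - 1) * ∫⁻ y in Ioi 0, C * (f y ^ p * w y) := by
        refine mul_le_mul_right (setLIntegral_mono_ae' measurableSet_Ioi
          (.of_forall fun y hy => ?_)) _
        rw [mul_left_comm]
        gcongr
        exact hweight y hy
    _ = _ := by rw [lintegral_const_mul' _ _ hC, mul_assoc]

/-- Pointwise bound of a first derivative by averages of the function and of its second
derivative. -/
theorem abs_deriv_le_integral_add_integral {g g₁ g₂ : ℝ → ℝ} (hg : ∀ r, HasDerivAt g (g₁ r) r)
    (hg₁ : ∀ r, HasDerivAt g₁ (g₂ r) r) (hg₂ : Continuous g₂) {a h x : ℝ} (hh : 0 < h)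
    (hx : x ∈ Icc a (a + 2 * h)) :
    |g₁ x| ≤ (h ^ 2)⁻¹ * (∫ y in a..(a + 2 * h), |g y|) + ∫ y in a..(a + 2 * h), |g₂ y| := by
  have hgc : Continuous g := continuous_iff_continuousAt.2 fun r => (hg r).continuousAt
  set K := ∫ y in a..(a + 2 * h), |g₂ y|
  have key : ∀ s ∈ Icc a (a + h), |g₁ x| * h - K * h ≤ |g s| + |g (s + h)| := by
    rintro s ⟨hs0, hs1⟩
    obtain ⟨ξ, ⟨hξ0, hξ1⟩, hξ⟩ := exists_hasDerivAt_eq_slope g g₁ (a := s) (b := s + h)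
      (by linarith) hgc.continuousOn fun y _ => hg y
    have h1 : |g₁ x - g₁ ξ| ≤ K := by
      rw [← intervalIntegral.integral_eq_sub_of_hasDerivAt (fun y _ => hg₁ y)
        (hg₂.intervalIntegrable _ _)]
      have hsub : uIoc ξ x ⊆ uIoc a (a + 2 * h) := by
        rw [uIoc_of_le (by linarith : a ≤ a + 2 * h)]
        intro y hy
        rcases mem_uIoc.1 hy with hy | hy <;> constructor <;> linarith [hx.1, hx.2, hy.1, hy.2]
      calc |∫ y in ξ..x, g₂ y| ≤ |∫ y in ξ..x, abs (g₂ y)| :=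
            intervalIntegral.norm_integral_le_abs_integral_norm (f := g₂)
        _ ≤ |K| := intervalIntegral.abs_integral_mono_interval hsub
            (.of_forall fun y => abs_nonneg _) (hg₂.abs.intervalIntegrable _ _)
        _ = K := abs_of_nonneg
            (intervalIntegral.integral_nonneg (by linarith) fun y _ => abs_nonneg _)
    have h2 : |g₁ ξ| * h ≤ |g s| + |g (s + h)| := by
      have : g₁ ξ * h = g (s + h) - g s := by
        rw [hξ, add_sub_cancel_left, div_mul_cancel₀ _ hh.ne']
      rw [← abs_of_pos hh, ← abs_mul, abs_of_pos hh, this]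
      linarith [abs_sub (g (s + h)) (g s)]
    have h3 : |g₁ x| ≤ |g₁ ξ| + K := by
      have := abs_sub_abs_le_abs_sub (g₁ x) (g₁ ξ)
      linarith
    nlinarith
  have hi : ∀ b c, IntervalIntegrable (fun y => |g y|) volume b c :=
    fun b c => hgc.abs.intervalIntegrable b c
  have hi' : ∀ b c, IntervalIntegrable (fun y => |g (y + h)|) volume b c :=
    fun b c => (hgc.comp (continuous_add_const h)).abs.intervalIntegrable b c
  have hint := intervalIntegral.integral_mono_on (μ := volume) (by linarith : a ≤ a + h)
    (continuous_const.intervalIntegrable _ _)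
    ((hi _ _).add (hi' _ _)) key
  rw [intervalIntegral.integral_const, intervalIntegral.integral_add (hi _ _) (hi' _ _),
    intervalIntegral.integral_comp_add_right (fun y => |g y|) h,
    show a + h + h = a + 2 * h by ring,
    intervalIntegral.integral_add_adjacent_intervals (hi _ _) (hi _ _), smul_eq_mul] at hint
  rw [← sub_le_iff_le_add, ← div_eq_inv_mul, le_div_iff₀ (by positivity)]
  linarith

/-- A continuous function whose `p`-th power is integrable against `x ^ α`, `α ≤ -1`, vanishes at
the origin. -/
theorem eq_zero_of_lintegral_rpow_ne_top {p α : ℝ} (hp : 0 < p) (hα : α ≤ -1) {f : ℝ → ℝ}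
    (hf : Continuous f)
    (hfin : ∫⁻ r in Ioi 0, ENNReal.ofReal |f r| ^ p * ENNReal.ofReal (r ^ α) ≠ ⊤) : f 0 = 0 := by
  by_contra h0
  have hc : 0 < |f 0| / 2 := by positivity
  have hev : ∀ᶠ r in nhds 0, |f 0| / 2 < |f r| :=
    hf.abs.continuousAt.eventually_const_lt (half_lt_self (abs_pos.2 h0))
  obtain ⟨δ, hδ, hball⟩ := Metric.eventually_nhds_iff.1 hev
  have hc' : ENNReal.ofReal (|f 0| / 2) ^ p ≠ 0 := by
    simp [hc, hp.not_gt]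
  have hlt : ENNReal.ofReal (|f 0| / 2) ^ p * ∫⁻ r in Ioo 0 δ, ENNReal.ofReal (r ^ α) < ⊤ := by
    rw [← lintegral_const_mul' _ _ (by finiteness)]
    refine lt_of_le_of_lt ?_ hfin.lt_top
    refine le_trans (setLIntegral_mono_ae' measurableSet_Ioo (.of_forall fun r hr => ?_))
      (lintegral_mono_set Ioo_subset_Ioi_self)
    gcongr
    refine (hball ?_).le
    rw [Real.dist_eq, sub_zero, abs_of_pos hr.1]
    exact hr.2
  have hlt' : ∫⁻ r in Ioo 0 δ, ENNReal.ofReal (r ^ α) < ⊤ :=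
    ENNReal.lt_top_of_mul_ne_top_right hlt.ne hc'
  have : IntegrableOn (fun r : ℝ => r ^ α) (Ioo 0 δ) := by
    refine ⟨by fun_prop, ?_⟩
    rw [hasFiniteIntegral_iff_ofReal]
    · exact hlt'
    · exact (ae_restrict_iff' measurableSet_Ioo).2 (.of_forall fun r hr => Real.rpow_nonneg hr.1.le _)
  have := (intervalIntegral.integrableOn_Ioo_rpow_iff hδ).1 this
  linarith

/-- The average of the power weight to the left of `y` at scale `h` is bounded by its
value at `y` if `α > -1`. -/
theorem setLIntegral_rpow_right_kernel_le {α h y : ℝ} (hα : -1 < α) (hh : 0 < h) (hy : 0 < y) :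
    ∫⁻ x in Ioi 0, {x | y ∈ Ioc x (x + 2 * h)}.indicator (fun x => ENNReal.ofReal (x ^ α)) x ≤
      ENNReal.ofReal ((4 / (α + 1) + 2 * 2 ^ |α|) * h) * ENNReal.ofReal (y ^ α) := by
  have hα' : 0 < α + 1 := by linarith
  have hyα : 0 < y ^ α := Real.rpow_pos_of_pos hy α
  have hmeas : MeasurableSet {x | y ∈ Ioc x (x + 2 * h)} := by
    have : {x | y ∈ Ioc x (x + 2 * h)} = Ico (y - 2 * h) y := by
      ext x; simp only [mem_ofPred_eq, mem_Ioc, mem_Ico]; constructor <;> rintro ⟨h1, h2⟩ <;>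
        constructor <;> linarith
    rw [this]; exact measurableSet_Ico
  rw [setLIntegral_indicator hmeas, ← ENNReal.ofReal_mul (by positivity)]
  rcases le_or_gt y (4 * h) with hyh | hyh
  · have hint : IntegrableOn (fun x : ℝ => x ^ α) (Ioc 0 y) :=
      (intervalIntegrable_iff_integrableOn_Ioc_of_le hy.le).1
        (intervalIntegral.intervalIntegrable_rpow' hα)
    calc _ ≤ ∫⁻ x in Ioc 0 y, ENNReal.ofReal (x ^ α) :=
          lintegral_mono_set fun x hx => ⟨hx.2, hx.1.1.le⟩
      _ = ENNReal.ofReal (∫ x in Ioc 0 y, x ^ α) := by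
          refine (ofReal_integral_eq_lintegral_ofReal hint ?_).symm
          exact (ae_restrict_iff' measurableSet_Ioc).2
            (.of_forall fun r hr => Real.rpow_nonneg hr.1.le _)
      _ ≤ _ := by
          refine ENNReal.ofReal_le_ofReal ?_
          rw [← intervalIntegral.integral_of_le hy.le, integral_rpow (.inl hα),
            Real.zero_rpow hα'.ne', Real.rpow_add_one hy.ne', sub_zero]
          have : y ^ α * y / (α + 1) ≤ y ^ α * (4 * h) / (α + 1) := by gcongr
          refine this.trans ?_
          have h2 : (0:ℝ) ≤ 2 * 2 ^ |α| * h * y ^ α := by positivity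
          calc y ^ α * (4 * h) / (α + 1) = 4 / (α + 1) * h * y ^ α := by ring
            _ ≤ _ := by linarith
  · calc _ ≤ ∫⁻ x in Ico (y - 2 * h) y, ENNReal.ofReal (2 ^ |α| * y ^ α) := by
          refine le_trans (lintegral_mono_set fun x hx => ?_) (setLIntegral_mono_ae'
            measurableSet_Ico (.of_forall fun x hx => ENNReal.ofReal_le_ofReal ?_))
          · exact ⟨by linarith [hx.1.2], hx.1.1⟩
          · have hx0 : 0 < x := by linarith [hx.1]
            have hxy : x ^ α = (y / x) ^ (-α) * y ^ α := by
              rw [Real.div_rpow hy.le hx0.le, Real.rpow_neg hy.le, Real.rpow_neg hx0.le]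
              field_simp
            rw [hxy]
            gcongr
            have h1 : 1 ≤ y / x := (one_le_div hx0).2 hx.2.le
            have h2 : y / x ≤ 2 := (div_le_iff₀ hx0).2 (by linarith [hx.1])
            calc (y / x) ^ (-α) ≤ (y / x) ^ |α| :=
                  Real.rpow_le_rpow_of_exponent_le h1 (neg_le_abs α)
              _ ≤ 2 ^ |α| := by gcongr
      _ = ENNReal.ofReal (2 ^ |α| * y ^ α * (2 * h)) := by
          rw [setLIntegral_const, Real.volume_Ico, ← ENNReal.ofReal_mul (by positivity)]
          ring_nf
      _ ≤ _ := by
          refine ENNReal.ofReal_le_ofReal ?_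
          have h2 : 0 ≤ 4 / (α + 1) * h * y ^ α := by positivity
          linarith

/-- The average of the power weight to the right of `y` at scale `h` is bounded by its
value at `y` if `α ≤ 0`. -/
theorem setLIntegral_rpow_left_kernel_le {α h y : ℝ} (hα : α ≤ 0) (hy : 0 < y) :
    ∫⁻ x in Ioi 0, {x | y ∈ Ioc (max 0 (x - 2 * h)) x}.indicator
      (fun x => ENNReal.ofReal (x ^ α)) x ≤
      ENNReal.ofReal (2 * h) * ENNReal.ofReal (y ^ α) := by
  calc _ ≤ ∫⁻ x in Ioi 0, (Icc y (y + 2 * h)).indicator (fun _ => ENNReal.ofReal (y ^ α)) x := by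
        refine lintegral_mono fun x => ?_
        by_cases hx : y ∈ Ioc (max 0 (x - 2 * h)) x
        · have hx' : x ∈ Icc y (y + 2 * h) :=
            ⟨hx.2, by linarith [(le_max_right 0 (x - 2 * h)).trans_lt hx.1]⟩
          rw [indicator_of_mem (show x ∈ {x | y ∈ Ioc (max 0 (x - 2 * h)) x} from hx),
            indicator_of_mem hx']
          exact ENNReal.ofReal_le_ofReal (Real.rpow_le_rpow_of_nonpos hy hx.2 hα)
        · rw [indicator_of_notMem (show x ∉ {x | y ∈ Ioc (max 0 (x - 2 * h)) x} from hx)]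
          exact zero_le
    _ ≤ ∫⁻ x, (Icc y (y + 2 * h)).indicator (fun _ => ENNReal.ofReal (y ^ α)) x :=
        setLIntegral_le_lintegral _ _
    _ = _ := by
        rw [lintegral_indicator measurableSet_Icc, setLIntegral_const, Real.volume_Icc, mul_comm]
        ring_nf

/-- Passage from interval integrals of absolute values to lower Lebesgue integrals. -/
theorem ofReal_intervalIntegral_abs {f : ℝ → ℝ} (hf : Continuous f) {a b : ℝ} (hab : a ≤ b) :
    ENNReal.ofReal (∫ y in a..b, |f y|) = ∫⁻ y in Ioc a b, ENNReal.ofReal |f y| := by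
  rw [intervalIntegral.integral_of_le hab]
  exact ofReal_integral_eq_lintegral_ofReal
    ((hf.abs.integrableOn_Icc (a := a) (b := b)).mono_set Ioc_subset_Icc_self)
    (.of_forall fun y => abs_nonneg _)

/-- The lower Lebesgue integral form of `abs_deriv_le_integral_add_integral`. -/
theorem ofReal_abs_deriv_le_lintegral_add_lintegral {g g₁ g₂ : ℝ → ℝ}
    (hg : ∀ r, HasDerivAt g (g₁ r) r) (hg₁ : ∀ r, HasDerivAt g₁ (g₂ r) r) (hg₂ : Continuous g₂)
    {a b h x : ℝ} (hh : 0 < h) (hb : b = a + 2 * h) (hx : x ∈ Icc a b) :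
    ENNReal.ofReal |g₁ x| ≤ ENNReal.ofReal (h ^ 2)⁻¹ * (∫⁻ y in Ioc a b, ENNReal.ofReal |g y|) +
      ∫⁻ y in Ioc a b, ENNReal.ofReal |g₂ y| := by
  subst hb
  have hab : a ≤ a + 2 * h := by linarith
  have hgc : Continuous g := continuous_iff_continuousAt.2 fun r => (hg r).continuousAt
  rw [← ofReal_intervalIntegral_abs hgc hab, ← ofReal_intervalIntegral_abs hg₂ hab,
    ← ENNReal.ofReal_mul (by positivity), ← ENNReal.ofReal_add]
  · exact ENNReal.ofReal_le_ofReal (abs_deriv_le_integral_add_integral hg hg₁ hg₂ hh hx)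
  · exact mul_nonneg (by positivity)
      (intervalIntegral.integral_nonneg hab fun y _ => abs_nonneg _)
  · exact intervalIntegral.integral_nonneg hab fun y _ => abs_nonneg _

/-- A derivative vanishing at the origin is bounded by the integral of the second derivative. -/
theorem ofReal_abs_le_lintegral_of_eq_zero {g₁ g₂ : ℝ → ℝ}
    (hg₁ : ∀ r, HasDerivAt g₁ (g₂ r) r) (hg₂ : Continuous g₂) (h0 : g₁ 0 = 0) {x : ℝ}
    (hx : 0 ≤ x) : ENNReal.ofReal |g₁ x| ≤ ∫⁻ y in Ioc 0 x, ENNReal.ofReal |g₂ y| := by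
  rw [← ofReal_intervalIntegral_abs hg₂ hx]
  refine ENNReal.ofReal_le_ofReal ?_
  have := intervalIntegral.integral_eq_sub_of_hasDerivAt (fun y _ => hg₁ y)
    (hg₂.intervalIntegrable 0 x)
  rw [h0, sub_zero] at this
  rw [← this]
  exact intervalIntegral.norm_integral_le_integral_norm (f := g₂) hx

/-- A kernel estimate turns pointwise control of `g₁` by averages of `g` and `g₂` into a weighted
interpolation inequality. -/
theorem lintegral_rpow_le_of_kernel {p : ℝ} (hp : 1 < p) {A : ℝ → Set ℝ}
    (hA : MeasurableSet {q : ℝ × ℝ | q.2 ∈ A q.1}) {h C : ℝ} (hh : 0 < h) (hC : 0 < C)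
    (hpos : ∀ x, 0 < x → A x ⊆ Ioi 0) (hvol : ∀ x, volume (A x) ≤ ENNReal.ofReal (2 * h))
    {w : ℝ → ENNReal} (hw : Measurable w)
    (hweight : ∀ y, 0 < y →
      ∫⁻ x in Ioi 0, {x | y ∈ A x}.indicator w x ≤ ENNReal.ofReal (C * h) * w y)
    {f f₁ f₂ : ℝ → ENNReal} (hf : Measurable f) (hf₂ : Measurable f₂)
    (hpt : ∀ x, 0 < x → f₁ x ≤
      ENNReal.ofReal (h ^ 2)⁻¹ * (∫⁻ y in A x, f y) + ∫⁻ y in A x, f₂ y) :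
    ∫⁻ x in Ioi 0, f₁ x ^ p * w x ≤ ENNReal.ofReal (2 ^ (p - 1) * (2 ^ (p - 1) * C)) *
      (ENNReal.ofReal (h ^ p) * (∫⁻ x in Ioi 0, f₂ x ^ p * w x) +
        ENNReal.ofReal (h ^ (-p)) * ∫⁻ x in Ioi 0, f x ^ p * w x) := by
  have hp0 : 0 < p := by linarith
  have hT : ∀ {f : ℝ → ENNReal}, Measurable f →
      Measurable fun x => (∫⁻ y in A x, f y) ^ p * w x := fun {f} hf => by
    refine Measurable.mul (Measurable.pow_const ?_ p) hw
    have : ∀ x, ∫⁻ y in A x, f y = ∫⁻ y, {q : ℝ × ℝ | q.2 ∈ A q.1}.indicator (fun q => f q.2) (x, y) :=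
      fun x => (lintegral_indicator (measurable_prodMk_left hA) f).symm
    simp_rw [this]
    exact ((hf.comp measurable_snd).indicator hA).lintegral_prod_right'
  have hS := fun {f : ℝ → ENNReal} (hf : Measurable f) => lintegral_rpow_setLIntegral_mul_le hp hA
    (by finiteness : ENNReal.ofReal (C * h) ≠ ⊤) hpos hvol hw hweight hf
  have hk : ENNReal.ofReal (2 * h) ^ (p - 1) * ENNReal.ofReal (C * h) =
      ENNReal.ofReal (2 ^ (p - 1) * C) * ENNReal.ofReal (h ^ p) := by
    rw [ENNReal.ofReal_rpow_of_pos (by positivity), ← ENNReal.ofReal_mul (by positivity),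
      ← ENNReal.ofReal_mul (by positivity), Real.mul_rpow (by positivity) hh.le,
      Real.rpow_sub_one hh.ne']
    congr 1
    field_simp
  have hk' : ENNReal.ofReal (h ^ 2)⁻¹ ^ p * ENNReal.ofReal (h ^ p) = ENNReal.ofReal (h ^ (-p)) := by
    rw [ENNReal.ofReal_rpow_of_pos (by positivity), ← ENNReal.ofReal_mul (by positivity),
      Real.inv_rpow (by positivity), ← Real.rpow_natCast, ← Real.rpow_mul hh.le,
      ← Real.rpow_neg hh.le, ← Real.rpow_add hh]
    congr 2
    push_cast
    ring
  have h2 : (2 : ENNReal) ^ (p - 1) = ENNReal.ofReal (2 ^ (p - 1)) := by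
    rw [← ENNReal.ofReal_rpow_of_pos two_pos, ENNReal.ofReal_ofNat]
  calc ∫⁻ x in Ioi 0, f₁ x ^ p * w x
      ≤ ∫⁻ x in Ioi 0, 2 ^ (p - 1) * (ENNReal.ofReal (h ^ 2)⁻¹ ^ p *
          ((∫⁻ y in A x, f y) ^ p * w x) + (∫⁻ y in A x, f₂ y) ^ p * w x) := by
        refine setLIntegral_mono_ae' measurableSet_Ioi (.of_forall fun x hx => ?_)
        calc _ ≤ (ENNReal.ofReal (h ^ 2)⁻¹ * (∫⁻ y in A x, f y) + ∫⁻ y in A x, f₂ y) ^ p * w x := by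
              gcongr
              exact hpt x hx
          _ ≤ _ := by
              rw [← mul_assoc (_ ^ p), ← add_mul, ← ENNReal.mul_rpow_of_nonneg _ _ hp0.le,
                ← mul_assoc]
              gcongr
              exact ENNReal.rpow_add_le_mul_rpow_add_rpow _ _ hp.le
    _ = 2 ^ (p - 1) * (ENNReal.ofReal (h ^ 2)⁻¹ ^ p *
          (∫⁻ x in Ioi 0, (∫⁻ y in A x, f y) ^ p * w x) +
          ∫⁻ x in Ioi 0, (∫⁻ y in A x, f₂ y) ^ p * w x) := by
        rw [lintegral_const_mul', lintegral_add_right _ (hT hf₂), lintegral_const_mul _ (hT hf)]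
        rw [h2]
        finiteness
    _ ≤ 2 ^ (p - 1) * (ENNReal.ofReal (h ^ 2)⁻¹ ^ p *
          (ENNReal.ofReal (2 * h) ^ (p - 1) * ENNReal.ofReal (C * h) *
            ∫⁻ x in Ioi 0, f x ^ p * w x) +
          ENNReal.ofReal (2 * h) ^ (p - 1) * ENNReal.ofReal (C * h) *
            ∫⁻ x in Ioi 0, f₂ x ^ p * w x) := by
        gcongr
        · exact hS hf
        · exact hS hf₂
    _ = _ := by
        rw [hk, h2, ENNReal.ofReal_mul (by positivity : (0:ℝ) ≤ 2 ^ (p - 1)),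
          ENNReal.ofReal_mul (by positivity : (0:ℝ) ≤ 2 ^ (p - 1)),
          ENNReal.ofReal_mul (by positivity : (0:ℝ) ≤ 2 ^ (p - 1)), ← hk']
        ring

/-- Weighted interpolation inequality on the half line. -/
theorem exists_weighted_interpolation_half_line {p : ℝ} (hp : 1 < p) (α : ℝ) :
    ∃ C : ℝ, 0 < C ∧ ∀ h : ℝ, 0 < h → ∀ g g₁ g₂ : ℝ → ℝ, (∀ r, HasDerivAt g (g₁ r) r) →
      (∀ r, HasDerivAt g₁ (g₂ r) r) → Continuous g₂ →
      ∫⁻ r in Ioi 0, ENNReal.ofReal |g₁ r| ^ p * ENNReal.ofReal (r ^ α) ≠ ⊤ →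
      ∫⁻ r in Ioi 0, ENNReal.ofReal |g₁ r| ^ p * ENNReal.ofReal (r ^ α) ≤ ENNReal.ofReal C *
        (ENNReal.ofReal (h ^ p) *
            (∫⁻ r in Ioi 0, ENNReal.ofReal |g₂ r| ^ p * ENNReal.ofReal (r ^ α)) +
          ENNReal.ofReal (h ^ (-p)) *
            ∫⁻ r in Ioi 0, ENNReal.ofReal |g r| ^ p * ENNReal.ofReal (r ^ α)) := by
  have hw : Measurable fun r : ℝ => ENNReal.ofReal (r ^ α) := by fun_prop
  have hmeas : ∀ {f : ℝ → ℝ}, Continuous f → Measurable fun r => ENNReal.ofReal |f r| :=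
    fun hf => hf.abs.measurable.ennreal_ofReal
  rcases lt_or_ge (-1) α with hα | hα
  · have hC : 0 < 4 / (α + 1) + 2 * 2 ^ |α| := by
      have : 0 < α + 1 := by linarith
      positivity
    refine ⟨2 ^ (p - 1) * (2 ^ (p - 1) * (4 / (α + 1) + 2 * 2 ^ |α|)), by positivity,
      fun h hh g g₁ g₂ hg hg₁ hg₂ _ => ?_⟩
    refine lintegral_rpow_le_of_kernel hp (A := fun x => Ioc x (x + 2 * h)) ?_ hh hC ?_ ?_ hw
      (fun y hy => setLIntegral_rpow_right_kernel_le hα hh hy)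
      (hmeas (continuous_iff_continuousAt.2 fun r => (hg r).continuousAt)) (hmeas hg₂)
      fun x hx => ofReal_abs_deriv_le_lintegral_add_lintegral hg hg₁ hg₂ hh rfl
        ⟨le_rfl, by linarith⟩
    · exact (measurableSet_lt measurable_fst measurable_snd).inter
        (measurableSet_le measurable_snd (measurable_fst.add_const _))
    · exact fun x hx y hy => hx.trans hy.1
    · intro x
      simp
  · refine ⟨2 ^ (p - 1) * (2 ^ (p - 1) * 2), by positivity, fun h hh g g₁ g₂ hg hg₁ hg₂ hfin => ?_⟩
    refine lintegral_rpow_le_of_kernel hp (A := fun x => Ioc (max 0 (x - 2 * h)) x) ?_ hh two_pos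
      ?_ ?_ hw (fun y hy => setLIntegral_rpow_left_kernel_le (by linarith) hy)
      (hmeas (continuous_iff_continuousAt.2 fun r => (hg r).continuousAt)) (hmeas hg₂)
      fun x hx => ?_
    · exact (measurableSet_lt (measurable_const.max (measurable_fst.sub_const _))
        measurable_snd).inter (measurableSet_le measurable_snd measurable_fst)
    · exact fun x hx y hy => (le_max_left _ _).trans_lt hy.1
    · intro x
      rw [Real.volume_Ioc]
      exact ENNReal.ofReal_le_ofReal (by linarith [le_max_right 0 (x - 2 * h)])
    · rcases le_total (x - 2 * h) 0 with hxh | hxh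
      · simp only [max_eq_left hxh]
        refine le_add_left (ofReal_abs_le_lintegral_of_eq_zero hg₁ hg₂ ?_ hx.le)
        exact eq_zero_of_lintegral_rpow_ne_top (by linarith) hα
          (continuous_iff_continuousAt.2 fun r => (hg₁ r).continuousAt) hfin
      · simp only [max_eq_right hxh]
        exact ofReal_abs_deriv_le_lintegral_add_lintegral hg hg₁ hg₂ hh (by ring)
          ⟨by linarith, le_rfl⟩

/-- A continuous functional on `ℝ × ℝⁿ` is controlled by its values on the vectors `(1, 0)` and
`(1, eᵢ)`. -/
theorem opNorm_le_sum_transversal {n : ℕ} (L : ℝ × EuclideanSpace ℝ (Fin n) →L[ℝ] ℝ) :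
    ‖L‖ ≤ ∑ j : Option (Fin n),
      (n + 1 : ℝ) * |L (1, j.elim 0 fun i => EuclideanSpace.single i 1)| := by
  refine L.opNorm_le_bound (Finset.sum_nonneg fun j _ => by positivity) ?_
  rintro ⟨a, y⟩
  set b : Option (Fin n) → ℝ := fun j => L (1, j.elim 0 fun i => EuclideanSpace.single i 1) with hb
  have hy : y = ∑ i, y i • EuclideanSpace.single i (1 : ℝ) := by
    conv_lhs => rw [← (EuclideanSpace.basisFun (Fin n) ℝ).sum_repr y]
    simp
  have hdec : ((a, y) : ℝ × EuclideanSpace ℝ (Fin n)) = a • ((1, 0) : ℝ × EuclideanSpace ℝ (Fin n)) +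
      ∑ i, y i • (((1, EuclideanSpace.single i 1) : ℝ × EuclideanSpace ℝ (Fin n)) - (1, 0)) := by
    refine Prod.ext ?_ ?_
    · simp [Prod.fst_sum]
    · simpa [Prod.snd_sum] using hy
  have hL : L (a, y) = a * b none + ∑ i, y i * (b (some i) - b none) := by
    rw [hdec, map_add, map_sum, map_smul, smul_eq_mul]
    simp_rw [map_smul, map_sub, smul_eq_mul]
    rfl
  have ha : |a| ≤ ‖(a, y)‖ := norm_fst_le (a, y)
  have hyi : ∀ i, |y i| ≤ ‖(a, y)‖ := fun i =>
    (PiLp.norm_apply_le y i).trans (norm_snd_le (a, y))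
  have hN : 0 ≤ ‖(a, y)‖ := norm_nonneg _
  calc ‖L (a, y)‖ ≤ |a * b none| + |∑ i, y i * (b (some i) - b none)| := by
        rw [hL]; exact abs_add_le _ _
    _ ≤ ‖(a, y)‖ * |b none| + ∑ i, ‖(a, y)‖ * (|b (some i)| + |b none|) := by
        rw [abs_mul]
        gcongr
        refine (Finset.abs_sum_le_sum_abs _ _).trans (Finset.sum_le_sum fun i _ => ?_)
        rw [abs_mul]
        gcongr
        · exact hyi i
        · exact abs_sub _ _
    _ = ‖(a, y)‖ * ((n + 1) * |b none| + ∑ i, |b (some i)|) := by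
        rw [← Finset.mul_sum, Finset.sum_add_distrib, Finset.sum_const, Finset.card_univ,
          Fintype.card_fin, nsmul_eq_mul]
        ring
    _ ≤ ‖(a, y)‖ * ((n + 1) * |b none| + ∑ i, (n + 1) * |b (some i)|) := by
        gcongr with i
        exact le_mul_of_one_le_left (abs_nonneg _) (by linarith [n.cast_nonneg (α := ℝ)])
    _ = _ := by rw [Fintype.sum_option, mul_comm]

/-- The `p`-th power version of `opNorm_le_sum_transversal`. -/
theorem exists_ofReal_opNorm_rpow_le_sum (n : ℕ) {p : ℝ} (hp : 1 < p) :
    ∃ K : ℝ, 0 < K ∧ ∀ L : ℝ × EuclideanSpace ℝ (Fin n) →L[ℝ] ℝ,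
      ENNReal.ofReal ‖L‖ ^ p ≤ ENNReal.ofReal K * ∑ j : Option (Fin n),
        ENNReal.ofReal |L (1, j.elim 0 fun i => EuclideanSpace.single i 1)| ^ p := by
  have hp0 : 0 < p := by linarith
  refine ⟨(n + 1) ^ (p - 1) * (n + 1) ^ p, by positivity, fun L => ?_⟩
  calc ENNReal.ofReal ‖L‖ ^ p ≤ (∑ j : Option (Fin n), ENNReal.ofReal (n + 1) *
        ENNReal.ofReal |L (1, j.elim 0 fun i => EuclideanSpace.single i 1)|) ^ p := by
        gcongr
        simp_rw [← ENNReal.ofReal_mul (by positivity : (0 : ℝ) ≤ n + 1)]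
        rw [← ENNReal.ofReal_sum_of_nonneg fun j _ => by positivity]
        exact ENNReal.ofReal_le_ofReal (opNorm_le_sum_transversal L)
    _ ≤ _ := ENNReal.rpow_sum_le_const_mul_sum_rpow _ _ hp.le
    _ = _ := by
        simp_rw [ENNReal.mul_rpow_of_nonneg _ _ hp0.le]
        rw [← Finset.mul_sum, ← mul_assoc, ENNReal.ofReal_mul (by positivity),
          ← ENNReal.ofReal_rpow_of_pos (by positivity), ← ENNReal.ofReal_rpow_of_pos (by positivity)]
        congr 3
        rw [Finset.card_univ, Fintype.card_option, Fintype.card_fin,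
          ENNReal.ofReal_add (by positivity) zero_le_one]
        simp

/-- Integration over the half space along lines transversal to the boundary. -/
theorem setLIntegral_hSp_eq_lintegral_transversal
    {G : ℝ × ℝ × EuclideanSpace ℝ (Fin (d - 1)) → ENNReal} (hG : Measurable G)
    (w : EuclideanSpace ℝ (Fin (d - 1))) :
    ∫⁻ z in hSp d, G z = ∫⁻ q : ℝ × EuclideanSpace ℝ (Fin (d - 1)),
      ∫⁻ r in Ioi 0, G (q.1, r, q.2 + r • w) := by
  have hS : hSp d = univ ×ˢ (Ioi 0 ×ˢ univ) := by ext z; simp [hSp]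
  have hG' : Measurable fun q : (ℝ × EuclideanSpace ℝ (Fin (d - 1))) × ℝ =>
      G (q.1.1, q.2, q.1.2 + q.2 • w) := hG.comp (by fun_prop)
  rw [hS, Measure.volume_eq_prod, Measure.volume_eq_prod,
    ← Measure.prod_restrict, ← Measure.prod_restrict, Measure.restrict_univ, Measure.restrict_univ,
    lintegral_prod _ hG.aemeasurable, lintegral_prod _ hG'.lintegral_prod_right'.aemeasurable]
  refine lintegral_congr fun t => ?_
  rw [lintegral_prod (fun x => G (t, x)) (hG.comp measurable_prodMk_left).aemeasurable]
  calc ∫⁻ r in Ioi 0, ∫⁻ y, G (t, r, y) = ∫⁻ r in Ioi 0, ∫⁻ y, G (t, r, y + r • w) :=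
        lintegral_congr fun r => (lintegral_add_right_eq_self (fun y => G (t, r, y)) (r • w)).symm
    _ = ∫⁻ y, ∫⁻ r in Ioi 0, G (t, r, y + r • w) :=
        lintegral_lintegral_swap (hG.comp (by fun_prop)).aemeasurable

/-- The derivative of a slice of a function on a product. -/
theorem fderiv_slice {V W : Type*} [NormedAddCommGroup V] [NormedSpace ℝ V]
    [NormedAddCommGroup W] [NormedSpace ℝ W] {F : ℝ × V → W} (hF : Differentiable ℝ F) (t : ℝ)
    (x : V) :
    fderiv ℝ (fun y => F (t, y)) x = (fderiv ℝ F (t, x)).comp (ContinuousLinearMap.inr ℝ ℝ V) :=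
  ((hF (t, x)).hasFDerivAt.comp x (hasFDerivAt_prodMk_right t x)).fderiv

/-- The derivative of a slice of a smooth function is smooth in all variables. -/
theorem contDiff_fderiv_slice {V W : Type*} [NormedAddCommGroup V] [NormedSpace ℝ V]
    [NormedAddCommGroup W] [NormedSpace ℝ W] {F : ℝ × V → W} (hF : ContDiff ℝ (⊤ : ℕ∞) F) :
    ContDiff ℝ (⊤ : ℕ∞) fun z : ℝ × V => fderiv ℝ (fun y => F (z.1, y)) z.2 := by
  simp_rw [fun z : ℝ × V => fderiv_slice (hF.differentiable (by simp)) z.1 z.2]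
  exact (hF.fderiv_right (m := (⊤ : ℕ∞)) (by simp)).clm_comp contDiff_const

/-- Differentiation of a slice of a smooth function along a line. -/
theorem hasDerivAt_slice_line {V W : Type*} [NormedAddCommGroup V] [NormedSpace ℝ V]
    [NormedAddCommGroup W] [NormedSpace ℝ W] {F : ℝ × ℝ × V → W} (hF : ContDiff ℝ (⊤ : ℕ∞) F)
    (t : ℝ) (y w : V) (r : ℝ) :
    HasDerivAt (fun r : ℝ => F (t, r, y + r • w))
      (fderiv ℝ (fun x : ℝ × V => F (t, x)) (r, y + r • w) (1, w)) r := by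
  have h1 : DifferentiableAt ℝ (fun x : ℝ × V => F (t, x)) (r, y + r • w) :=
    ((hF.differentiable (by simp)).comp (by fun_prop : Differentiable ℝ fun x : ℝ × V => (t, x))) _
  have h2 : HasDerivAt (fun r : ℝ => (r, y + r • w)) (1, w) r := by
    refine (hasDerivAt_id r).prodMk ?_
    simpa using ((hasDerivAt_id r).smul_const w).const_add y
  exact h1.hasFDerivAt.comp_hasDerivAt r h2

/-- Interpolation of a transversal derivative on the half space. -/
theorem exists_interpolation_transversal {p : ℝ} (hp : 1 < p) (α : ℝ) :
    ∃ C : ℝ, 0 < C ∧ ∀ h : ℝ, 0 < h →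
      ∀ u : ℝ × ℝ × EuclideanSpace ℝ (Fin (d - 1)) → ℝ, ContDiff ℝ (⊤ : ℕ∞) u →
      ∫⁻ z in hSp d, ENNReal.ofReal ‖sGrad d u z‖ ^ p * ENNReal.ofReal (z.2.1 ^ α) ≠ ⊤ →
      ∀ w : EuclideanSpace ℝ (Fin (d - 1)), ‖w‖ ≤ 1 →
      ∫⁻ z in hSp d, ENNReal.ofReal |sGrad d u z (1, w)| ^ p * ENNReal.ofReal (z.2.1 ^ α) ≤
        ENNReal.ofReal C * (ENNReal.ofReal (h ^ p) *
            (∫⁻ z in hSp d, ENNReal.ofReal ‖sHess d u z‖ ^ p * ENNReal.ofReal (z.2.1 ^ α)) +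
          ENNReal.ofReal (h ^ (-p)) *
            ∫⁻ z in hSp d, ENNReal.ofReal |u z| ^ p * ENNReal.ofReal (z.2.1 ^ α)) := by
  obtain ⟨C, hC, H⟩ := exists_weighted_interpolation_half_line hp α
  refine ⟨C, hC, fun h hh u hu hfin w hw => ?_⟩
  have hp0 : 0 < p := by linarith
  have hv : ‖((1, w) : ℝ × EuclideanSpace ℝ (Fin (d - 1)))‖ ≤ 1 := by
    rw [Prod.norm_mk]
    simpa using hw
  have hgrad : ContDiff ℝ (⊤ : ℕ∞) (sGrad d u) := contDiff_fderiv_slice hu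
  have hhess : ContDiff ℝ (⊤ : ℕ∞) (sHess d u) := contDiff_fderiv_slice hgrad
  have hm : ∀ {f : ℝ × ℝ × EuclideanSpace ℝ (Fin (d - 1)) → ℝ}, Continuous f →
      Measurable fun z => ENNReal.ofReal (f z) ^ p * ENNReal.ofReal (z.2.1 ^ α) := fun hf =>
    (hf.measurable.ennreal_ofReal.pow_const p).mul (by fun_prop)
  have hm0 := hm hu.continuous.abs
  have hm1 := hm (hgrad.continuous.clm_apply (continuous_const (y := (1, w)))).abs
  have hm2 := hm
    ((hhess.continuous.clm_apply (continuous_const (y := (1, w)))).clm_apply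
      (continuous_const (y := (1, w)))).abs
  have hline : ∀ {f : ℝ × ℝ × EuclideanSpace ℝ (Fin (d - 1)) → ENNReal}, Measurable f →
      Measurable fun q : ℝ × EuclideanSpace ℝ (Fin (d - 1)) =>
        ∫⁻ r in Ioi 0, f (q.1, r, q.2 + r • w) := fun {f} hf => by
    have : Measurable fun q : (ℝ × EuclideanSpace ℝ (Fin (d - 1))) × ℝ =>
      f (q.1.1, q.2, q.1.2 + q.2 • w) := hf.comp (by fun_prop)
    exact this.lintegral_prod_right'
  have hfin' : ∫⁻ z in hSp d,
      ENNReal.ofReal |sGrad d u z (1, w)| ^ p * ENNReal.ofReal (z.2.1 ^ α) ≠ ⊤ := by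
    refine ne_top_of_le_ne_top hfin (lintegral_mono fun z => ?_)
    gcongr
    exact (sGrad d u z).unit_le_opNorm _ hv
  have hae : ∀ᵐ q : ℝ × EuclideanSpace ℝ (Fin (d - 1)), ∫⁻ r in Ioi 0,
      ENNReal.ofReal |sGrad d u (q.1, r, q.2 + r • w) (1, w)| ^ p * ENNReal.ofReal (r ^ α) < ⊤ := by
    rw [setLIntegral_hSp_eq_lintegral_transversal d hm1 w] at hfin'
    exact ae_lt_top (hline hm1) hfin'
  calc _ = ∫⁻ q : ℝ × EuclideanSpace ℝ (Fin (d - 1)), ∫⁻ r in Ioi 0,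
        ENNReal.ofReal |sGrad d u (q.1, r, q.2 + r • w) (1, w)| ^ p * ENNReal.ofReal (r ^ α) :=
        setLIntegral_hSp_eq_lintegral_transversal d hm1 w
    _ ≤ ∫⁻ q : ℝ × EuclideanSpace ℝ (Fin (d - 1)), ENNReal.ofReal C * (ENNReal.ofReal (h ^ p) *
          (∫⁻ r in Ioi 0, ENNReal.ofReal |sHess d u (q.1, r, q.2 + r • w) (1, w) (1, w)| ^ p *
            ENNReal.ofReal (r ^ α)) + ENNReal.ofReal (h ^ (-p)) *
          ∫⁻ r in Ioi 0, ENNReal.ofReal |u (q.1, r, q.2 + r • w)| ^ p *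
            ENNReal.ofReal (r ^ α)) := by
        refine lintegral_mono_ae (hae.mono fun q hq => ?_)
        refine H h hh (fun r => u (q.1, r, q.2 + r • w)) _ _
          (fun r => hasDerivAt_slice_line hu q.1 q.2 w r) (fun r => ?_) ?_ hq.ne
        · have h1 := hasDerivAt_slice_line hgrad q.1 q.2 w r
          exact ((ContinuousLinearMap.apply ℝ ℝ
            ((1, w) : ℝ × EuclideanSpace ℝ (Fin (d - 1)))).hasFDerivAt.comp_hasDerivAt r h1)
        · have : Continuous fun r : ℝ => sHess d u (q.1, r, q.2 + r • w) :=
            hhess.continuous.comp (by fun_prop)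
          exact (this.clm_apply continuous_const).clm_apply continuous_const
    _ = ENNReal.ofReal C * (ENNReal.ofReal (h ^ p) *
          (∫⁻ z in hSp d, ENNReal.ofReal |sHess d u z (1, w) (1, w)| ^ p *
            ENNReal.ofReal (z.2.1 ^ α)) + ENNReal.ofReal (h ^ (-p)) *
          ∫⁻ z in hSp d, ENNReal.ofReal |u z| ^ p * ENNReal.ofReal (z.2.1 ^ α)) := by
        rw [setLIntegral_hSp_eq_lintegral_transversal d hm2 w,
          setLIntegral_hSp_eq_lintegral_transversal d hm0 w,
          lintegral_const_mul' _ _ (by finiteness),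
          lintegral_add_left ((hline hm2).const_mul _), lintegral_const_mul' _ _ (by finiteness),
          lintegral_const_mul' _ _ (by finiteness)]
    _ ≤ _ := by
        gcongr with z
        calc ‖sHess d u z (1, w) (1, w)‖ ≤ ‖sHess d u z (1, w)‖ :=
              (sHess d u z (1, w)).unit_le_opNorm _ hv
          _ ≤ _ := (sHess d u z).unit_le_opNorm _ hv

/-- The weighted norm as an integral of a product of `ENNReal`-valued functions. -/
theorem wNorm_eq_of_nonneg (p θ : ℝ) {g : ℝ × ℝ × EuclideanSpace ℝ (Fin (d - 1)) → ℝ}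
    (hp : 0 < p) (hg : ∀ z, 0 ≤ g z) :
    wNorm d p θ g =
      (∫⁻ z in hSp d, ENNReal.ofReal (g z) ^ p * ENNReal.ofReal (z.2.1 ^ (θ - (d : ℝ)))) ^
        (1 / p) := by
  rw [wNorm]
  congr 1
  refine lintegral_congr fun z => ?_
  rw [ENNReal.ofReal_mul (Real.rpow_nonneg (hg z) p), ENNReal.ofReal_rpow_of_nonneg (hg z) hp.le]

/-- Interpolation inequality in weighted `L_p` on the half space: for `p ∈ (1,∞)`,
`θ ∈ ℝ`, `λ > 0`, and any `u` with `u, Du, D²u` in weighted `L_p`,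
`√λ ‖Du‖_{p,θ} ≤ C ‖D²u‖_{p,θ} + C λ ‖u‖_{p,θ}` with `C = C(d,p,θ)`. -/
theorem stmt_6 (hd : 1 ≤ d) (p θ : ℝ) (hp : 1 < p) :
    ∃ C : ℝ, 0 < C ∧ ∀ (lam : ℝ), 0 < lam →
      ∀ (u : ℝ × ℝ × EuclideanSpace ℝ (Fin (d - 1)) → ℝ), ContDiff ℝ (⊤ : ℕ∞) u →
        wNorm d p θ (fun z => |u z|) ≠ ⊤ →
        wNorm d p θ (fun z => ‖sGrad d u z‖) ≠ ⊤ →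
        wNorm d p θ (fun z => ‖sHess d u z‖) ≠ ⊤ →
        ENNReal.ofReal (Real.sqrt lam) * wNorm d p θ (fun z => ‖sGrad d u z‖) ≤
          ENNReal.ofReal C * wNorm d p θ (fun z => ‖sHess d u z‖) +
            ENNReal.ofReal (C * lam) * wNorm d p θ (fun z => |u z|) := by
  have hp0 : 0 < p := by linarith
  have hp1 : 0 ≤ 1 / p := by positivity
  obtain ⟨C, hC, H⟩ := exists_interpolation_transversal d hp (θ - d)
  obtain ⟨K, hK, hnorm⟩ := exists_ofReal_opNorm_rpow_le_sum (d - 1) hp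
  set M : ℝ := K * (((d - 1 : ℕ) + 1) * C) with hM
  have hM0 : 0 < M := by positivity
  refine ⟨M ^ (1 / p), by positivity, fun lam hlam u hu _ hfin _ => ?_⟩
  have hs : 0 < Real.sqrt lam := Real.sqrt_pos.2 hlam
  set h : ℝ := (Real.sqrt lam)⁻¹ with hh
  have hh0 : 0 < h := inv_pos.2 hs
  rw [wNorm_eq_of_nonneg d p θ hp0 fun z => norm_nonneg (sGrad d u z)] at hfin
  rw [wNorm_eq_of_nonneg d p θ hp0 fun z => norm_nonneg (sGrad d u z),
    wNorm_eq_of_nonneg d p θ hp0 fun z => norm_nonneg (sHess d u z),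
    wNorm_eq_of_nonneg d p θ hp0 fun z => abs_nonneg (u z)]
  set I₁ := ∫⁻ z in hSp d, ENNReal.ofReal ‖sGrad d u z‖ ^ p * ENNReal.ofReal (z.2.1 ^ (θ - (d : ℝ)))
  set I₂ := ∫⁻ z in hSp d, ENNReal.ofReal ‖sHess d u z‖ ^ p * ENNReal.ofReal (z.2.1 ^ (θ - (d : ℝ)))
  set I₀ := ∫⁻ z in hSp d, ENNReal.ofReal |u z| ^ p * ENNReal.ofReal (z.2.1 ^ (θ - (d : ℝ)))
  have hI₁ : I₁ ≠ ⊤ := fun htop => hfin (by rw [htop]; exact ENNReal.top_rpow_of_pos (by positivity))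
  have hgrad : ContDiff ℝ (⊤ : ℕ∞) (sGrad d u) := contDiff_fderiv_slice hu
  let w : Option (Fin (d - 1)) → EuclideanSpace ℝ (Fin (d - 1)) :=
    fun j => j.elim 0 fun i => EuclideanSpace.single i 1
  have hw : ∀ j, ‖w j‖ ≤ 1 := by rintro (_ | i) <;> simp [w]
  have hmain : I₁ ≤ ENNReal.ofReal M *
      (ENNReal.ofReal (h ^ p) * I₂ + ENNReal.ofReal (h ^ (-p)) * I₀) := by
    calc I₁ ≤ ∫⁻ z in hSp d, ENNReal.ofReal K * ∑ j,
          ENNReal.ofReal |sGrad d u z (1, w j)| ^ p * ENNReal.ofReal (z.2.1 ^ (θ - (d : ℝ))) := by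
          refine lintegral_mono fun z => ?_
          rw [← Finset.sum_mul, ← mul_assoc]
          gcongr
          exact hnorm _
      _ = ENNReal.ofReal K * ∑ j, ∫⁻ z in hSp d,
          ENNReal.ofReal |sGrad d u z (1, w j)| ^ p * ENNReal.ofReal (z.2.1 ^ (θ - (d : ℝ))) := by
          rw [lintegral_const_mul' _ _ (by finiteness), lintegral_finsetSum]
          intro j _
          exact ((hgrad.continuous.clm_apply
            continuous_const).abs.measurable.ennreal_ofReal.pow_const p).mul (by fun_prop)
      _ ≤ ENNReal.ofReal K * ∑ _j : Option (Fin (d - 1)), ENNReal.ofReal C *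
          (ENNReal.ofReal (h ^ p) * I₂ + ENNReal.ofReal (h ^ (-p)) * I₀) := by
          gcongr with j
          exact H h hh0 u hu hI₁ (w j) (hw j)
      _ = _ := by
          rw [Finset.sum_const, Finset.card_univ, Fintype.card_option, Fintype.card_fin,
            nsmul_eq_mul, hM, ENNReal.ofReal_mul hK.le, ENNReal.ofReal_mul (by positivity),
            ENNReal.ofReal_add (by positivity) zero_le_one]
          simp [mul_assoc]
  have hroot : I₁ ^ (1 / p) ≤ ENNReal.ofReal (M ^ (1 / p)) *
      (ENNReal.ofReal h * I₂ ^ (1 / p) + ENNReal.ofReal (Real.sqrt lam) * I₀ ^ (1 / p)) := by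
    have e1 : ENNReal.ofReal (h ^ p) ^ (1 / p) = ENNReal.ofReal h := by
      rw [ENNReal.ofReal_rpow_of_pos (by positivity), ← Real.rpow_mul hh0.le,
        mul_one_div_cancel hp0.ne', Real.rpow_one]
    have e2 : ENNReal.ofReal (h ^ (-p)) ^ (1 / p) = ENNReal.ofReal (Real.sqrt lam) := by
      rw [ENNReal.ofReal_rpow_of_pos (by positivity), ← Real.rpow_mul hh0.le, neg_mul,
        mul_one_div_cancel hp0.ne', Real.rpow_neg_one, hh, inv_inv]
    calc I₁ ^ (1 / p) ≤ (ENNReal.ofReal M *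
          (ENNReal.ofReal (h ^ p) * I₂ + ENNReal.ofReal (h ^ (-p)) * I₀)) ^ (1 / p) := by gcongr
      _ ≤ ENNReal.ofReal (M ^ (1 / p)) * ((ENNReal.ofReal (h ^ p) * I₂) ^ (1 / p) +
          (ENNReal.ofReal (h ^ (-p)) * I₀) ^ (1 / p)) := by
          rw [ENNReal.mul_rpow_of_nonneg _ _ hp1, ENNReal.ofReal_rpow_of_pos hM0]
          gcongr
          exact ENNReal.rpow_add_le_add_rpow _ _ hp1 ((div_le_one hp0).2 hp.le)
      _ = _ := by
          rw [ENNReal.mul_rpow_of_nonneg _ _ hp1, ENNReal.mul_rpow_of_nonneg _ _ hp1, e1, e2]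
  have e3 : ENNReal.ofReal (Real.sqrt lam) * ENNReal.ofReal h = 1 := by
    rw [← ENNReal.ofReal_mul hs.le, hh, mul_inv_cancel₀ hs.ne', ENNReal.ofReal_one]
  have e4 : ENNReal.ofReal (Real.sqrt lam) * ENNReal.ofReal (Real.sqrt lam) =
      ENNReal.ofReal lam := by
    rw [← ENNReal.ofReal_mul hs.le, Real.mul_self_sqrt hlam.le]
  calc _ ≤ ENNReal.ofReal (Real.sqrt lam) * (ENNReal.ofReal (M ^ (1 / p)) *
        (ENNReal.ofReal h * I₂ ^ (1 / p) + ENNReal.ofReal (Real.sqrt lam) * I₀ ^ (1 / p))) := by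
        gcongr
    _ = ENNReal.ofReal (M ^ (1 / p)) *
        ((ENNReal.ofReal (Real.sqrt lam) * ENNReal.ofReal h) * I₂ ^ (1 / p) +
          (ENNReal.ofReal (Real.sqrt lam) * ENNReal.ofReal (Real.sqrt lam)) * I₀ ^ (1 / p)) := by
        ring
    _ = _ := by
        rw [e3, e4, ENNReal.ofReal_mul (by positivity), one_mul, mul_add, mul_assoc]

end
end
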